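/- arXiv:0811.4288 — 2 statements merged into one kernel-verified Lean document; each statement's English description precedes it below -/
import Mathlib

section
/- For every Parry number β, the number of non-reciprocal irreducible factors in the factorization of the Parry polynomial n*_β over ℤ[X], counted with multiplicity (including the minimal polynomial P_β of β if it is non-reciprocal), is strictly less than Log ‖n*_β‖₂ / Log θ₀, where θ₀ = 1.3247… is the smallest Pisot number, i.e. the unique real root greater than 1 of X³ − X − 1. -/
open Polynomial

noncomputable section

/-- Iterates `T_β^j(1)` of the beta-transformation `T_β(x) = βx - ⌊βx⌋` at `1`. -/
def Titer (β : ℝ) : ℕ → ℝ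
  | 0 => 1
  | j + 1 => Int.fract (β * Titer β j)

/-- The digits `t_i = ⌊β · T_β^{i-1}(1)⌋` for `i ≥ 1` (junk value `0` at `i = 0`). -/
def tdigit (β : ℝ) : ℕ → ℤ
  | 0 => 0
  | i + 1 => ⌊β * Titer β i⌋

/-- The Parry polynomial of a simple Parry number with `d_β(1) = 0.t₁…t_m`. -/
def simpleParryPoly (β : ℝ) (m : ℕ) : Polynomial ℤ :=
  X ^ m - ∑ i ∈ Finset.Icc 1 m, C (tdigit β i) * X ^ (m - i)

/-- The Parry polynomial of a non-simple Parry number with preperiod `m`, period `p+1`. -/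
def nonsimpleParryPoly (β : ℝ) (m p : ℕ) : Polynomial ℤ :=
  X ^ (m + p + 1) - ∑ i ∈ Finset.Icc 1 (m + p + 1), C (tdigit β i) * X ^ (m + p + 1 - i)
    - X ^ m + ∑ i ∈ Finset.Icc 1 m, C (tdigit β i) * X ^ (m - i)

/-- `β` is a Parry number (non-integer, `> 1`, with eventually periodic digit sequence
`(t_i)`) and `P` is its Parry polynomial: either `β` is a simple Parry number with
`d_β(1) = 0.t₁…t_m` (`m` maximal with `t_m ≠ 0`), or `β` is a non-simple Parry number with
minimal preperiod length `m ≥ 0` and minimal period length `p+1 ≥ 1`. -/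
def IsParryPolyOf (β : ℝ) (P : Polynomial ℤ) : Prop :=
  1 < β ∧ (∀ n : ℤ, (n : ℝ) ≠ β) ∧
  ((∃ m : ℕ, 1 ≤ m ∧ tdigit β m ≠ 0 ∧ (∀ i, m < i → tdigit β i = 0) ∧
      P = simpleParryPoly β m) ∨
   ((∀ N : ℕ, ∃ i, N < i ∧ tdigit β i ≠ 0) ∧
    ∃ m p : ℕ,
      (∀ i, m + 1 ≤ i → tdigit β (i + (p + 1)) = tdigit β i) ∧
      (∀ q : ℕ, 0 < q → (∃ m', ∀ i, m' + 1 ≤ i → tdigit β (i + q) = tdigit β i) →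
        p + 1 ≤ q) ∧
      (∀ m', m' < m → ¬ (∀ i, m' + 1 ≤ i → tdigit β (i + (p + 1)) = tdigit β i)) ∧
      P = nonsimpleParryPoly β m p))

/-- The 2-norm of an integer polynomial. -/
def polyNorm2 (P : Polynomial ℤ) : ℝ :=
  Real.sqrt (∑ j ∈ Finset.range (P.natDegree + 1), ((P.coeff j : ℝ)) ^ 2)

/-- Number of non-reciprocal polynomials in the multiset `F`, counted with multiplicity.
A polynomial `g` (of degree `n`, with nonzero constant term) is reciprocal when
`g* = g`, where `g*(X) = Xⁿ·g(1/X)` is the reciprocal polynomial, i.e. `g.reverse = g`. -/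
def countNonReciprocal (F : Multiset (Polynomial ℤ)) : ℕ :=
  Multiset.card (@Multiset.filter (Polynomial ℤ)
    (fun g => ¬ g.reverse = g) (Classical.decPred _) F)


lemma toe3 (c e1 e2 : ℝ) (hc : 0 < c) (hc1 : c < 1)
    (hT : ∀ v0 v1 v2 : ℝ, (v0 * c) ^ 2 + (v0 * e1 + v1 * c) ^ 2 +
      (v0 * e2 + v1 * e1 + v2 * c) ^ 2 ≤ v0 ^ 2 + v1 ^ 2 + v2 ^ 2) :
    e1 ≤ 1 - c ^ 2 ∧ -e1 ≤ 1 - c ^ 2 ∧ e2 ≤ 1 - c ^ 2 - e1 ^ 2 / (1 - c) ∧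
      -e2 ≤ 1 - c ^ 2 - e1 ^ 2 / (1 + c) := by
  have hT2 : ∀ v : ℝ, c ^ 2 + (e1 + v * c) ^ 2 ≤ 1 + v ^ 2 := by
    intro v
    have := hT 1 v 0
    nlinarith [sq_nonneg (1 * e2 + v * e1 + 0 * c)]
  have hp : ∀ v0 v1 v2 : ℝ, v0 ^ 2 * e2 + 2 * v0 * v1 * e1 + 2 * v0 * v2 * c + v1 ^ 2 * c
      ≤ v0 ^ 2 + v1 ^ 2 + v2 ^ 2 := by
    intro v0 v1 v2
    have := hT v0 v1 v2
    nlinarith [sq_nonneg (v0 * c - v2), sq_nonneg (v0 * e1 + v1 * c - v1),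
      sq_nonneg (v0 * e2 + v1 * e1 + v2 * c - v0)]
  have hm : ∀ v0 v1 v2 : ℝ, -(v0 ^ 2 * e2 + 2 * v0 * v1 * e1 + 2 * v0 * v2 * c + v1 ^ 2 * c)
      ≤ v0 ^ 2 + v1 ^ 2 + v2 ^ 2 := by
    intro v0 v1 v2
    have := hT v0 v1 v2
    nlinarith [sq_nonneg (v0 * c + v2), sq_nonneg (v0 * e1 + v1 * c + v1),
      sq_nonneg (v0 * e2 + v1 * e1 + v2 * c + v0)]
  refine ⟨?_, ?_, ?_, ?_⟩
  · have := hT2 c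
    nlinarith [sq_nonneg (e1 + c * c - 1)]
  · have := hT2 (-c)
    nlinarith [sq_nonneg (e1 + (-c) * c + 1)]
  · have h1 : (1 - c) ≠ 0 := by linarith
    have := hp 1 (e1 / (1 - c)) c
    have e : e1 = (e1 / (1 - c)) * (1 - c) := by field_simp
    have e' : e1 ^ 2 / (1 - c) = (e1 / (1 - c)) ^ 2 * (1 - c) := by field_simp
    rw [e']
    generalize e1 / (1 - c) = t at *
    subst e
    linarith
  · have h1 : (1 + c) ≠ 0 := by linarith
    have := hm 1 (-e1 / (1 + c)) (-c)
    have e : e1 = (e1 / (1 + c)) * (1 + c) := by field_simp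
    have e' : e1 ^ 2 / (1 + c) = (e1 / (1 + c)) ^ 2 * (1 + c) := by field_simp
    rw [e']
    rw [neg_div] at this
    generalize e1 / (1 + c) = t at *
    subst e
    linarith

lemma num2k_aux (c y : ℝ) (hc : 0 < c) (hc1 : c < 1) (hy : c + c ^ 2 - 1 ≤ y) (hy2 : y ≤ 1 - c ^ 2)
    (h : y ≤ 2 * (1 - c ^ 2) - y ^ 2 / (1 - c) - (c - y) ^ 2 / (1 + c)) : c ^ 3 + c ^ 2 ≤ 1 := by
  by_contra hcon
  push Not at hcon
  have hd : (0:ℝ) < 1 - c := by linarith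
  have hd' : (0:ℝ) < 1 + c := by linarith
  have h2 : y * ((1 - c) * (1 + c)) ≤ 2 * (1 - c ^ 2) * ((1 - c) * (1 + c)) - y ^ 2 * (1 + c)
      - (c - y) ^ 2 * (1 - c) := by
    have := mul_le_mul_of_nonneg_right h (mul_pos hd hd').le
    have e : (2 * (1 - c ^ 2) - y ^ 2 / (1 - c) - (c - y) ^ 2 / (1 + c)) * ((1 - c) * (1 + c)) =
      2 * (1 - c ^ 2) * ((1 - c) * (1 + c)) - y ^ 2 * (1 + c)
      - (c - y) ^ 2 * (1 - c) := by field_simp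
    linarith
  have hc7 : 0.75 < c := by nlinarith [sq_nonneg c]
  obtain ⟨t, rfl⟩ : ∃ t, y = c + c ^ 2 - 1 + t := ⟨y - (c + c ^ 2 - 1), by ring⟩
  have ht : 0 ≤ t := by linarith
  have h0 : 0 < (c ^ 3 + c ^ 2 - 1) * (c + 1) := by
    apply mul_pos <;> linarith
  have h1 : 0 ≤ t * ((1 + c) * (5 * c - 3)) := by
    apply mul_nonneg ht
    apply mul_nonneg <;> linarith
  nlinarith [sq_nonneg t]

lemma num2k (c x G2 H2 : ℝ) (a : ℤ) (hc : 0 < c) (hc1 : c < 1)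
    (hG : ∀ v0 v1 v2 : ℝ, (v0 * c) ^ 2 + (v0 * (x + c) + v1 * c) ^ 2 +
      (v0 * G2 + v1 * (x + c) + v2 * c) ^ 2 ≤ v0 ^ 2 + v1 ^ 2 + v2 ^ 2)
    (hH : ∀ v0 v1 v2 : ℝ, (v0 * c) ^ 2 + (v0 * x + v1 * c) ^ 2 +
      (v0 * H2 + v1 * x + v2 * c) ^ 2 ≤ v0 ^ 2 + v1 ^ 2 + v2 ^ 2)
    (h : G2 = H2 + x + a * c) : c ^ 3 + c ^ 2 ≤ 1 := by
  obtain ⟨g1, g2, g3, g4⟩ := toe3 _ _ _ hc hc1 hG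
  obtain ⟨h1, h2, h3, h4⟩ := toe3 _ _ _ hc hc1 hH
  rcases le_or_gt 1 a with ha | ha
  · have ha' : (1 : ℝ) ≤ a := by exact_mod_cast ha
    have : c ≤ a * c := by nlinarith
    apply num2k_aux c (x + c) hc hc1 (by linarith) g1
    have e : (c - (x + c)) ^ 2 = x ^ 2 := by ring
    rw [e]; linarith
  · have ha' : (a : ℝ) ≤ 0 := by exact_mod_cast (by omega : a ≤ 0)
    have : a * c ≤ 0 := by nlinarith
    apply num2k_aux c (-x) hc hc1 (by linarith) h2
    have e : (c - (-x)) ^ 2 = (x + c) ^ 2 := by ring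
    rw [e, neg_sq]; linarith

lemma toe4 (c y e1 w e2 : ℝ)
    (hT : ∀ v0 v1 v2 v3 : ℝ, (v0 * c) ^ 2 + (v0 * y + v1 * c) ^ 2 +
      (v0 * e1 + v1 * w + v2 * c) ^ 2 + (v0 * e2 + v1 * e1 + v2 * y + v3 * c) ^ 2
        ≤ v0 ^ 2 + v1 ^ 2 + v2 ^ 2 + v3 ^ 2) (v0 v1 v2 v3 : ℝ) :
    v0 ^ 2 * e2 + 2 * v0 * v1 * e1 + 2 * v0 * v2 * y + 2 * v0 * v3 * c + v1 ^ 2 * w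
      + 2 * v1 * v2 * c ≤ v0 ^ 2 + v1 ^ 2 + v2 ^ 2 + v3 ^ 2 ∧
    -(v0 ^ 2 * e2 + 2 * v0 * v1 * e1 + 2 * v0 * v2 * y + 2 * v0 * v3 * c + v1 ^ 2 * w
      + 2 * v1 * v2 * c) ≤ v0 ^ 2 + v1 ^ 2 + v2 ^ 2 + v3 ^ 2 := by
  have := hT v0 v1 v2 v3
  constructor
  · nlinarith [sq_nonneg (v0 * c - v3), sq_nonneg (v0 * y + v1 * c - v2),
      sq_nonneg (v0 * e1 + v1 * w + v2 * c - v1),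
      sq_nonneg (v0 * e2 + v1 * e1 + v2 * y + v3 * c - v0)]
  · nlinarith [sq_nonneg (v0 * c + v3), sq_nonneg (v0 * y + v1 * c + v2),
      sq_nonneg (v0 * e1 + v1 * w + v2 * c + v1),
      sq_nonneg (v0 * e2 + v1 * e1 + v2 * y + v3 * c + v0)]

lemma num4 (c x y w Gl Hl : ℝ) (a : ℤ) (ha : a ≠ 0) (hc : 0 < c)
    (hG : ∀ v0 v1 v2 v3 : ℝ, (v0 * c) ^ 2 + (v0 * y + v1 * c) ^ 2 +
      (v0 * (x + c) + v1 * w + v2 * c) ^ 2 + (v0 * Gl + v1 * (x + c) + v2 * y + v3 * c) ^ 2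
        ≤ v0 ^ 2 + v1 ^ 2 + v2 ^ 2 + v3 ^ 2)
    (hH : ∀ v0 v1 v2 v3 : ℝ, (v0 * c) ^ 2 + (v0 * y + v1 * c) ^ 2 +
      (v0 * x + v1 * w + v2 * c) ^ 2 + (v0 * Hl + v1 * x + v2 * y + v3 * c) ^ 2
        ≤ v0 ^ 2 + v1 ^ 2 + v2 ^ 2 + v3 ^ 2)
    (h : Gl = Hl + y + a * c) : c ^ 3 + c ^ 2 ≤ 1 := by
  have h1 : ∀ v0 v1 v2 v3 : ℝ, (v0 ^ 2 + 4 * v0 * v2) * y +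
      (a * v0 ^ 2 + 2 * v0 * v1 + 4 * v0 * v3 + 4 * v1 * v2) * c
      ≤ 2 * (v0 ^ 2 + v1 ^ 2 + v2 ^ 2 + v3 ^ 2) := by
    intro v0 v1 v2 v3
    have A := (toe4 _ _ _ _ _ hG v0 v1 v2 v3).1
    have B := (toe4 _ _ _ _ _ hH v0 v1 (-v2) (-v3)).2
    subst h
    linarith
  have h2 : ∀ v0 v1 v2 v3 : ℝ, -((v0 ^ 2 + 4 * v0 * v2) * y +
      (a * v0 ^ 2 + 2 * v0 * v1 + 4 * v0 * v3 + 4 * v1 * v2) * c)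
      ≤ 2 * (v0 ^ 2 + v1 ^ 2 + v2 ^ 2 + v3 ^ 2) := by
    intro v0 v1 v2 v3
    have A := (toe4 _ _ _ _ _ hG v0 v1 v2 v3).2
    have B := (toe4 _ _ _ _ _ hH v0 v1 (-v2) (-v3)).1
    subst h
    linarith
  have hc7 : c ≤ 0.7548 := by
    obtain rfl | rfl | h3 | h3 : a = 1 ∨ a = -1 ∨ 2 ≤ a ∨ a ≤ -2 := by omega
    · have A := h1 1 0.53 0.2 0.755
      have B := h2 1 (-1.223) 1.12 (-0.755)
      norm_num at A B ⊢
      linarith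
    · have A := h2 1 (-0.53) 0.2 (-0.755)
      have B := h1 1 (1.223) 1.12 (0.755)
      norm_num at A B ⊢
      linarith
    · have h3' : (2 : ℝ) ≤ a := by exact_mod_cast h3
      have A := h1 1 0.19 (-0.25) 0.75
      norm_num at A ⊢
      nlinarith
    · have h3' : (a : ℝ) ≤ -2 := by exact_mod_cast h3
      have A := h2 1 (-0.19) (-0.25) (-0.75)
      norm_num at A ⊢
      nlinarith
  nlinarith [mul_nonneg hc.le (sub_nonneg.2 hc7), mul_nonneg hc.le (mul_nonneg hc.le (sub_nonneg.2 hc7))]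

/-- Multiplication by `G` does not increase truncated `ℓ²` norms (real version). -/
def IsRC (G : PowerSeries ℝ) : Prop := ∀ (p : PowerSeries ℝ) (N : ℕ),
  ∑ i ∈ Finset.range N, (PowerSeries.coeff i (G * p)) ^ 2 ≤
    ∑ i ∈ Finset.range N, (PowerSeries.coeff i p) ^ 2

lemma coeff_mul_monomial_aux (G : PowerSeries ℝ) (m n : ℕ) (v : ℝ) :
    PowerSeries.coeff m (G * PowerSeries.monomial n v) =
      if n ≤ m then v * PowerSeries.coeff (m - n) G else 0 := by
  have e : PowerSeries.monomial n v = PowerSeries.C v * PowerSeries.X ^ n := by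
    ext j
    rw [PowerSeries.coeff_monomial, PowerSeries.coeff_C_mul_X_pow]
  have e2 : G * (PowerSeries.C v * PowerSeries.X ^ n) = PowerSeries.C v * G * PowerSeries.X ^ n := by
    ring
  rw [e, e2, PowerSeries.coeff_mul_X_pow', PowerSeries.coeff_C_mul]

lemma IsRC.four {G : PowerSeries ℝ} (hG : IsRC G) {i k : ℕ} (hi : 0 < i) (hik : i < k)
    (v0 v1 v2 v3 : ℝ) :
    (v0 * PowerSeries.coeff 0 G) ^ 2 +
    (v0 * PowerSeries.coeff i G + v1 * PowerSeries.coeff 0 G) ^ 2 +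
    (v0 * PowerSeries.coeff k G + v1 * PowerSeries.coeff (k - i) G + v2 * PowerSeries.coeff 0 G) ^ 2 +
    (v0 * PowerSeries.coeff (k + i) G + v1 * PowerSeries.coeff k G + v2 * PowerSeries.coeff i G
      + v3 * PowerSeries.coeff 0 G) ^ 2 ≤ v0 ^ 2 + v1 ^ 2 + v2 ^ 2 + v3 ^ 2 := by
  have h := hG (PowerSeries.monomial 0 v0 + PowerSeries.monomial i v1 + PowerSeries.monomial k v2 +
    PowerSeries.monomial (k + i) v3) (k + i + 1)
  have hR : ∑ m ∈ Finset.range (k + i + 1), (PowerSeries.coeff m (PowerSeries.monomial 0 v0 +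
      PowerSeries.monomial i v1 + PowerSeries.monomial k v2 +
      PowerSeries.monomial (k + i) v3)) ^ 2 = v0 ^ 2 + v1 ^ 2 + v2 ^ 2 + v3 ^ 2 := by
    have : ∀ m ∈ Finset.range (k + i + 1), (PowerSeries.coeff m (PowerSeries.monomial 0 v0 +
      PowerSeries.monomial i v1 + PowerSeries.monomial k v2 +
      PowerSeries.monomial (k + i) v3)) ^ 2 = (if m = 0 then v0 ^ 2 else 0) +
      (if m = i then v1 ^ 2 else 0) + (if m = k then v2 ^ 2 else 0) +
      (if m = k + i then v3 ^ 2 else 0) := by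
      intro m _
      simp only [map_add, PowerSeries.coeff_monomial]
      split_ifs <;> first | omega | ring
    rw [Finset.sum_congr rfl this]
    simp only [Finset.sum_add_distrib, Finset.sum_ite_eq', Finset.mem_range]
    rw [if_pos (by omega), if_pos (by omega), if_pos (by omega), if_pos (by omega)]
  have hL : ∑ m ∈ ({0, i, k, k + i} : Finset ℕ), (PowerSeries.coeff m (G * (PowerSeries.monomial 0 v0 +
      PowerSeries.monomial i v1 + PowerSeries.monomial k v2 +
      PowerSeries.monomial (k + i) v3))) ^ 2 ≤ v0 ^ 2 + v1 ^ 2 + v2 ^ 2 + v3 ^ 2 := by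
    rw [← hR]
    refine le_trans (Finset.sum_le_sum_of_subset_of_nonneg ?_ ?_) h
    · intro m hm
      simp only [Finset.mem_insert, Finset.mem_singleton] at hm
      rw [Finset.mem_range]; omega
    · intros; positivity
  rw [Finset.sum_insert (by simp; omega), Finset.sum_insert (by simp; omega),
    Finset.sum_insert (by simp; omega), Finset.sum_singleton] at hL
  simp only [mul_add, map_add, coeff_mul_monomial_aux] at hL
  simp only [Nat.zero_le, if_true, Nat.sub_zero, le_refl, Nat.sub_self,
    if_neg (by omega : ¬ i ≤ 0), if_neg (by omega : ¬ k ≤ 0), if_neg (by omega : ¬ k + i ≤ 0),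
    if_neg (by omega : ¬ k ≤ i), if_neg (by omega : ¬ k + i ≤ i), if_neg (by omega : ¬ k + i ≤ k),
    if_pos (by omega : i ≤ k), if_pos (by omega : i ≤ k + i), if_pos (by omega : k ≤ k + i),
    Nat.add_sub_cancel, Nat.add_sub_cancel_left] at hL
  linarith

lemma IsRC.three {G : PowerSeries ℝ} (hG : IsRC G) {k : ℕ} (hk : 0 < k)
    (v0 v1 v2 : ℝ) :
    (v0 * PowerSeries.coeff 0 G) ^ 2 +
    (v0 * PowerSeries.coeff k G + v1 * PowerSeries.coeff 0 G) ^ 2 +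
    (v0 * PowerSeries.coeff (k + k) G + v1 * PowerSeries.coeff k G
      + v2 * PowerSeries.coeff 0 G) ^ 2 ≤ v0 ^ 2 + v1 ^ 2 + v2 ^ 2 := by
  have h := hG (PowerSeries.monomial 0 v0 + PowerSeries.monomial k v1 +
    PowerSeries.monomial (k + k) v2) (k + k + 1)
  have hR : ∑ m ∈ Finset.range (k + k + 1), (PowerSeries.coeff m (PowerSeries.monomial 0 v0 +
      PowerSeries.monomial k v1 +
      PowerSeries.monomial (k + k) v2)) ^ 2 = v0 ^ 2 + v1 ^ 2 + v2 ^ 2 := by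
    have : ∀ m ∈ Finset.range (k + k + 1), (PowerSeries.coeff m (PowerSeries.monomial 0 v0 +
      PowerSeries.monomial k v1 +
      PowerSeries.monomial (k + k) v2)) ^ 2 = (if m = 0 then v0 ^ 2 else 0) +
      (if m = k then v1 ^ 2 else 0) +
      (if m = k + k then v2 ^ 2 else 0) := by
      intro m _
      simp only [map_add, PowerSeries.coeff_monomial]
      split_ifs <;> first | omega | ring
    rw [Finset.sum_congr rfl this]
    simp only [Finset.sum_add_distrib, Finset.sum_ite_eq', Finset.mem_range]
    rw [if_pos (by omega), if_pos (by omega), if_pos (by omega)]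
  have hL : ∑ m ∈ ({0, k, k + k} : Finset ℕ), (PowerSeries.coeff m (G * (PowerSeries.monomial 0 v0 +
      PowerSeries.monomial k v1 +
      PowerSeries.monomial (k + k) v2))) ^ 2 ≤ v0 ^ 2 + v1 ^ 2 + v2 ^ 2 := by
    rw [← hR]
    refine le_trans (Finset.sum_le_sum_of_subset_of_nonneg ?_ ?_) h
    · intro m hm
      simp only [Finset.mem_insert, Finset.mem_singleton] at hm
      rw [Finset.mem_range]; omega
    · intros; positivity
  rw [Finset.sum_insert (by simp; omega), Finset.sum_insert (by simp; omega),
    Finset.sum_singleton] at hL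
  simp only [mul_add, map_add, coeff_mul_monomial_aux] at hL
  simp only [Nat.zero_le, if_true, Nat.sub_zero, le_refl, Nat.sub_self,
    if_neg (by omega : ¬ k ≤ 0), if_neg (by omega : ¬ k + k ≤ 0),
    if_neg (by omega : ¬ k + k ≤ k), if_pos (by omega : k ≤ k + k),
    Nat.add_sub_cancel, Nat.add_sub_cancel_left] at hL
  linarith

lemma core_one {G H : PowerSeries ℝ} (hG : IsRC G) (hH : IsRC H) {i k : ℕ} (hi : 0 < i)
    (hik : i ≤ k) (a : ℤ) (c : ℝ) (hc : 0 < c) (hc1 : c < 1)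
    (h0 : PowerSeries.coeff 0 H = c) (hlow : ∀ j < k, PowerSeries.coeff j G = PowerSeries.coeff j H)
    (hk : PowerSeries.coeff k G = PowerSeries.coeff k H + c)
    (hki : PowerSeries.coeff (k + i) G = PowerSeries.coeff (k + i) H + PowerSeries.coeff i H + a * c)
    (ha : i < k → a ≠ 0) : c ^ 3 + c ^ 2 ≤ 1 := by
  have h0' : PowerSeries.coeff 0 G = c := by rw [hlow 0 (by omega), h0]
  rcases hik.lt_or_eq with hlt | rfl
  · have A := fun v0 v1 v2 v3 => hG.four hi hlt v0 v1 v2 v3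
    have B := fun v0 v1 v2 v3 => hH.four hi hlt v0 v1 v2 v3
    rw [h0', hlow i hlt, hlow (k - i) (by omega), hk] at A
    rw [h0] at B
    exact num4 c _ _ _ _ _ a (ha hlt) hc A B hki
  · have A := fun v0 v1 v2 => hG.three hi v0 v1 v2
    have B := fun v0 v1 v2 => hH.three hi v0 v1 v2
    rw [h0', hk] at A
    rw [h0] at B
    exact num2k c _ _ _ a hc hc1 A B hki

lemma exists_split (r : PowerSeries ℤ) (k : ℕ) (hk : 0 < k) :
    ∃ (i : ℕ) (r' : PowerSeries ℤ), 0 < i ∧ i ≤ k ∧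
      r = PowerSeries.C (PowerSeries.coeff 0 r) + PowerSeries.X ^ i * r' ∧
      (i < k → PowerSeries.coeff 0 r' ≠ 0) := by
  set s := r - PowerSeries.C (PowerSeries.coeff 0 r) with hs
  have hs0 : PowerSeries.coeff 0 s = 0 := by simp [hs]
  classical
  have key : ∃ i, 0 < i ∧ i ≤ k ∧ (∀ j < i, PowerSeries.coeff j s = 0) ∧
      (i < k → PowerSeries.coeff i s ≠ 0) := by
    by_cases hex : ∃ j, j < k ∧ PowerSeries.coeff j s ≠ 0
    · refine ⟨Nat.find hex, ?_, (Nat.find_spec hex).1.le, ?_, fun _ => (Nat.find_spec hex).2⟩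
      · rw [Nat.pos_iff_ne_zero]
        intro h
        have := (Nat.find_spec hex).2
        rw [h] at this
        exact this hs0
      · intro j hj
        have := Nat.find_min hex hj
        push Not at this
        exact this (hj.trans (Nat.find_spec hex).1)
    · push Not at hex
      exact ⟨k, hk, le_rfl, hex, fun h => absurd h (lt_irrefl _)⟩
  obtain ⟨i, hi0, hik, hlow, hne⟩ := key
  obtain ⟨r', hr'⟩ := PowerSeries.X_pow_dvd_iff.2 hlow
  refine ⟨i, r', hi0, hik, ?_, ?_⟩
  · rw [← hr', hs]; ring
  · intro h
    have := hne h
    rw [hr'] at this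
    simpa [PowerSeries.coeff_X_pow_mul'] using this

theorem core (f : PowerSeries ℤ) {G H : PowerSeries ℝ} (hG : IsRC G) (hH : IsRC H)
    (hf0 : PowerSeries.coeff 0 f = 1) (hf : f ≠ 1)
    (hGH : G = PowerSeries.map (Int.castRingHom ℝ) f * H) (c : ℝ) (hc : 0 < c)
    (h0 : PowerSeries.coeff 0 H = c) : c ^ 3 + c ^ 2 ≤ 1 := by
  classical
  have hex : ∃ j, PowerSeries.coeff j (f - 1) ≠ 0 := by
    by_contra hcon
    push Not at hcon
    apply hf
    rw [← sub_eq_zero]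
    ext j; simpa using hcon j
  set k := Nat.find hex with hk
  have hk0 : 0 < k := by
    rw [Nat.pos_iff_ne_zero]
    intro h
    have := Nat.find_spec hex
    rw [← hk, h] at this
    rw [map_sub, hf0] at this
    simp at this
  obtain ⟨r, hr⟩ := PowerSeries.X_pow_dvd_iff.2 (fun j (hj : j < k) => by
    simpa using Nat.find_min hex hj : ∀ j < k, PowerSeries.coeff j (f - 1) = 0)
  have hr0 : PowerSeries.coeff 0 r ≠ 0 := by
    have := Nat.find_spec hex
    rw [← hk, hr] at this
    simpa [PowerSeries.coeff_X_pow_mul'] using this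
  obtain ⟨i, r', hi0, hik, hrr, hne⟩ := exists_split r k hk0
  set b := PowerSeries.coeff 0 r with hb
  set a := PowerSeries.coeff 0 r' with ha
  have hf' : f = 1 + PowerSeries.X ^ k * r := by rw [← hr]; ring
  have hG' : G = H + PowerSeries.X ^ k * (PowerSeries.C (b : ℝ) * H + PowerSeries.X ^ i *
      (PowerSeries.map (Int.castRingHom ℝ) r' * H)) := by
    rw [hGH, hf', hrr]
    simp only [map_add, map_mul, map_one, map_pow, PowerSeries.map_X, PowerSeries.map_C]
    simp
    ring
  have hlow : ∀ j < k, PowerSeries.coeff j G = PowerSeries.coeff j H := by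
    intro j hj
    rw [hG', map_add, PowerSeries.coeff_X_pow_mul', if_neg (by omega), add_zero]
  have hkk : PowerSeries.coeff k G = PowerSeries.coeff k H + b * c := by
    rw [hG', map_add, PowerSeries.coeff_X_pow_mul', if_pos le_rfl, Nat.sub_self, map_add,
      PowerSeries.coeff_X_pow_mul', if_neg (by omega), add_zero, PowerSeries.coeff_C_mul, h0]
  have hki : PowerSeries.coeff (k + i) G = PowerSeries.coeff (k + i) H + b * PowerSeries.coeff i H
      + a * c := by
    have e : PowerSeries.coeff 0 (PowerSeries.map (Int.castRingHom ℝ) r' * H) = a * c := by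
      rw [PowerSeries.coeff_mul]
      simp [← h0, ha]
    rw [hG', map_add, PowerSeries.coeff_X_pow_mul', if_pos (by omega), Nat.add_sub_cancel_left,
      map_add, PowerSeries.coeff_X_pow_mul', if_pos le_rfl, Nat.sub_self,
      PowerSeries.coeff_C_mul, e]
    ring
  have h0' : PowerSeries.coeff 0 G = c := by rw [hlow 0 hk0, h0]
  have hbG := fun v0 v1 v2 => hG.three hk0 v0 v1 v2
  have hbH := fun v0 v1 v2 => hH.three hk0 v0 v1 v2
  have hbR : (b : ℝ) ≠ 0 := by exact_mod_cast hr0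
  have hc1 : c < 1 := by
    have A := hbG 1 0 0
    have B := hbH 1 0 0
    rw [h0', hkk] at A
    rw [h0] at B
    by_contra hcon
    push Not at hcon
    have hx : PowerSeries.coeff k H = 0 := by
      nlinarith [sq_nonneg (PowerSeries.coeff (k + k) H), sq_nonneg (PowerSeries.coeff k H)]
    rw [hx] at A
    have : 0 < (b * c) ^ 2 := by positivity
    nlinarith [sq_nonneg (PowerSeries.coeff (k + k) G)]
  rw [h0'] at hbG
  rw [h0] at hbH
  obtain ⟨g1, g2, -, -⟩ := toe3 _ _ _ hc hc1 hbG
  obtain ⟨h1, h2, -, -⟩ := toe3 _ _ _ hc hc1 hbH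
  obtain hb1 | hb1 | hb1 | hb1 : b = 1 ∨ b = -1 ∨ 2 ≤ b ∨ b ≤ -2 := by omega
  · rw [hb1] at hkk hki
    exact core_one hG hH hi0 hik a c hc hc1 h0 hlow (by rw [hkk]; simp) (by rw [hki]; simp) hne
  · rw [hb1] at hkk hki
    rcases hik.lt_or_eq with hlt | hieq
    · refine core_one hH hG hi0 hik (-a) c hc hc1 h0' (fun j hj => (hlow j hj).symm)
        (by rw [hkk]; simp) ?_ (fun h => by simpa using hne h)
      rw [hki, hlow i hlt]; push_cast; ring
    · refine core_one hH hG hi0 hik (1 - a) c hc hc1 h0' (fun j hj => (hlow j hj).symm)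
        (by rw [hkk]; simp) ?_ (fun h => by omega)
      rw [hki, hieq, hkk]; push_cast; ring
  · have hb2 : (2 : ℝ) ≤ b := by exact_mod_cast hb1
    have : 2 * c ≤ b * c := by nlinarith
    have h3 : c ≤ 1 - c ^ 2 := by linarith
    nlinarith
  · have hb2 : (b : ℝ) ≤ -2 := by exact_mod_cast hb1
    have : b * c ≤ -2 * c := by nlinarith
    have h3 : c ≤ 1 - c ^ 2 := by linarith
    nlinarith

section Complex

/-- Multiplication by `b` does not increase truncated `ℓ²` norms. -/
def IsContr (b : PowerSeries ℂ) : Prop := ∀ (p : PowerSeries ℂ) (N : ℕ),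
  ∑ i ∈ Finset.range N, ‖PowerSeries.coeff i (b * p)‖ ^ 2 ≤
    ∑ i ∈ Finset.range N, ‖PowerSeries.coeff i p‖ ^ 2

lemma IsContr.one : IsContr 1 := by
  intro p N
  rw [one_mul]

lemma IsContr.mul {a b : PowerSeries ℂ} (ha : IsContr a) (hb : IsContr b) : IsContr (a * b) := by
  intro p N
  rw [mul_assoc]
  exact (ha _ N).trans (hb p N)

lemma IsContr.const {u : ℂ} (hu : ‖u‖ = 1) : IsContr (PowerSeries.C u) := by
  intro p N
  simp [PowerSeries.coeff_C_mul, hu]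

lemma IsContr.multiset_prod {s : Multiset (PowerSeries ℂ)} (h : ∀ b ∈ s, IsContr b) :
    IsContr s.prod := by
  induction s using Multiset.induction_on with
  | empty => simpa using IsContr.one
  | cons a s ih =>
    rw [Multiset.prod_cons]
    exact (h a (by simp)).mul (ih fun b hb => h b (by simp [hb]))

open ComplexConjugate in
lemma blaschke_identity (α p q : ℂ) :
    ‖p + conj α * q‖ ^ 2 - ‖q + α * p‖ ^ 2 = (1 - ‖α‖ ^ 2) * (‖p‖ ^ 2 - ‖q‖ ^ 2) := by
  simp only [← Complex.normSq_eq_norm_sq, Complex.normSq_apply]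
  simp
  ring

open ComplexConjugate in
lemma blaschke_sum (α : ℂ) (p q : PowerSeries ℂ)
    (h : (1 - PowerSeries.C (conj α) * PowerSeries.X) * q =
      (PowerSeries.X - PowerSeries.C α) * p) (N : ℕ) :
    0 ≤ (1 - ‖α‖ ^ 2) * (∑ i ∈ Finset.range N, ‖PowerSeries.coeff i p‖ ^ 2 -
      ∑ i ∈ Finset.range N, ‖PowerSeries.coeff i q‖ ^ 2) := by
  have hz : PowerSeries.coeff 0 q + α * PowerSeries.coeff 0 p = 0 := by
    have := congrArg (PowerSeries.coeff 0) h
    simp [sub_mul, mul_assoc] at this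
    simp [this]
  have hs : ∀ n, PowerSeries.coeff (n + 1) q + α * PowerSeries.coeff (n + 1) p =
      PowerSeries.coeff n p + conj α * PowerSeries.coeff n q := by
    intro n
    have := congrArg (PowerSeries.coeff (n + 1)) h
    simp only [sub_mul, mul_assoc, map_sub, one_mul, PowerSeries.coeff_C_mul,
      PowerSeries.coeff_succ_X_mul] at this
    linear_combination this
  have key : ∀ n, (1 - ‖α‖ ^ 2) * (∑ i ∈ Finset.range (n + 1), ‖PowerSeries.coeff i p‖ ^ 2 -
      ∑ i ∈ Finset.range (n + 1), ‖PowerSeries.coeff i q‖ ^ 2) =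
      ‖PowerSeries.coeff n p + conj α * PowerSeries.coeff n q‖ ^ 2 := by
    intro n
    induction n with
    | zero =>
      have := blaschke_identity α (PowerSeries.coeff 0 p) (PowerSeries.coeff 0 q)
      rw [hz] at this
      simp only [zero_add, Finset.range_one, Finset.sum_singleton, ← this]
      simp
    | succ n ih =>
      have := blaschke_identity α (PowerSeries.coeff (n + 1) p) (PowerSeries.coeff (n + 1) q)
      rw [hs, ← ih] at this
      rw [Finset.sum_range_succ _ (n + 1), Finset.sum_range_succ _ (n + 1)]
      linarith
  cases N with
  | zero => simp
  | succ n => rw [key]; positivity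

open ComplexConjugate

lemma cc_one_sub (β : ℂ) : PowerSeries.constantCoeff (1 - PowerSeries.C β * PowerSeries.X) ≠ 0 := by
  simp

lemma cc_X_sub {β : ℂ} (h : β ≠ 0) :
    PowerSeries.constantCoeff (PowerSeries.X - PowerSeries.C β) ≠ 0 := by
  simpa using h

/-- Blaschke factor for roots in the closed disc. -/
noncomputable def gfac (α : ℂ) : PowerSeries ℂ := open Classical in
  if ‖α‖ ≤ 1 then
    (PowerSeries.X - PowerSeries.C α) * (1 - PowerSeries.C (conj α) * PowerSeries.X)⁻¹ else 1

/-- Blaschke factor for roots outside the closed disc. -/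
noncomputable def hfac (α : ℂ) : PowerSeries ℂ := open Classical in
  if ‖α‖ ≤ 1 then 1 else
    (1 - PowerSeries.C (conj α) * PowerSeries.X) * (PowerSeries.X - PowerSeries.C α)⁻¹

lemma ne_zero_of_not_le {α : ℂ} (h : ¬ ‖α‖ ≤ 1) : α ≠ 0 := by
  rintro rfl
  simp at h

lemma gfac_contr (α : ℂ) : IsContr (gfac α) := by
  unfold gfac
  split_ifs with h
  · rcases h.lt_or_eq with hlt | heq
    · intro p N
      set q := (PowerSeries.X - PowerSeries.C α) *
        (1 - PowerSeries.C (conj α) * PowerSeries.X)⁻¹ * p with hq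
      have e : (1 - PowerSeries.C (conj α) * PowerSeries.X) * q =
          (PowerSeries.X - PowerSeries.C α) * p := by
        rw [hq]
        linear_combination (PowerSeries.X - PowerSeries.C α) * p *
          PowerSeries.mul_inv_cancel _ (cc_one_sub (conj α))
      have := blaschke_sum α p q e N
      have h2 : 0 < 1 - ‖α‖ ^ 2 := by nlinarith [norm_nonneg α]
      have := nonneg_of_mul_nonneg_right this h2
      linarith
    · have e : PowerSeries.X - PowerSeries.C α =
          PowerSeries.C (-α) * (1 - PowerSeries.C (conj α) * PowerSeries.X) := by
        have h1 : α * conj α = 1 := by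
          rw [Complex.mul_conj, Complex.normSq_eq_norm_sq, heq]; simp
        have h2 : PowerSeries.C α * PowerSeries.C (conj α) = (1 : PowerSeries ℂ) := by
          rw [← map_mul, h1, map_one]
        rw [map_neg]
        linear_combination - PowerSeries.X * h2
      rw [e, mul_assoc, PowerSeries.mul_inv_cancel _ (cc_one_sub (conj α)), mul_one]
      exact IsContr.const (by simpa using heq)
  · exact IsContr.one

lemma hfac_contr (α : ℂ) : IsContr (hfac α) := by
  unfold hfac
  split_ifs with h
  · exact IsContr.one
  · intro p N
    set q := (1 - PowerSeries.C (conj α) * PowerSeries.X) *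
      (PowerSeries.X - PowerSeries.C α)⁻¹ * p with hq
    have e : (1 - PowerSeries.C (conj α) * PowerSeries.X) * p =
        (PowerSeries.X - PowerSeries.C α) * q := by
      rw [hq]
      linear_combination -(1 - PowerSeries.C (conj α) * PowerSeries.X) * p *
        PowerSeries.mul_inv_cancel _ (cc_X_sub (ne_zero_of_not_le h))
    have := blaschke_sum α q p e N
    push Not at h
    have h2 : 0 < ‖α‖ ^ 2 - 1 := by nlinarith [norm_nonneg α]
    nlinarith

lemma gh_fac (α : ℂ) : gfac α * (1 - PowerSeries.C (conj α) * PowerSeries.X) =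
    hfac α * (PowerSeries.X - PowerSeries.C α) := by
  unfold gfac hfac
  split_ifs with h
  · linear_combination (PowerSeries.X - PowerSeries.C α) *
      PowerSeries.mul_inv_cancel _ (cc_one_sub (conj α))
  · linear_combination -(1 - PowerSeries.C (conj α) * PowerSeries.X) *
      PowerSeries.mul_inv_cancel _ (cc_X_sub (ne_zero_of_not_le h))

/-- The polynomial version of `hfac α * (X - α)`. -/
noncomputable def qfac (α : ℂ) : Polynomial ℂ := open Classical in
  if ‖α‖ ≤ 1 then Polynomial.X - Polynomial.C α else
    1 - Polynomial.C (conj α) * Polynomial.X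

lemma hfac_mul (α : ℂ) : hfac α * (PowerSeries.X - PowerSeries.C α) = (qfac α : PowerSeries ℂ) := by
  unfold hfac qfac
  split_ifs with h
  · simp
  · simp only [Polynomial.coe_sub, Polynomial.coe_one, Polynomial.coe_mul, Polynomial.coe_C,
      Polynomial.coe_X]
    linear_combination (1 - PowerSeries.C (conj α) * PowerSeries.X) *
      PowerSeries.mul_inv_cancel _ (cc_X_sub (ne_zero_of_not_le h))

lemma norm_hfac_zero (α : ℂ) : ‖PowerSeries.constantCoeff (hfac α)‖ = (max 1 ‖α‖)⁻¹ := by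
  unfold hfac
  split_ifs with h
  · simp [h]
  · push Not at h
    simp [max_eq_right h.le]

/-- Real part of a power series. -/
noncomputable def rePS (g : PowerSeries ℂ) : PowerSeries ℝ :=
  PowerSeries.mk fun i => (PowerSeries.coeff i g).re

lemma rePS_mul (g : PowerSeries ℂ) (p : PowerSeries ℝ) :
    rePS (g * PowerSeries.map Complex.ofRealHom p) = rePS g * p := by
  ext n
  simp [rePS, PowerSeries.coeff_mul, Complex.re_sum]

lemma IsContr.rePS {g : PowerSeries ℂ} (hg : IsContr g) : IsRC (rePS g) := by
  intro p N
  rw [← rePS_mul]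
  refine le_trans ?_ (le_trans (hg (PowerSeries.map Complex.ofRealHom p) N) ?_)
  · apply Finset.sum_le_sum
    intro i _
    rw [_root_.rePS, PowerSeries.coeff_mk, sq_le_sq, abs_norm]
    exact Complex.abs_re_le_norm _
  · apply Finset.sum_le_sum
    intro i _
    simp

/-- Mahler measure of a monic integer polynomial. -/
noncomputable def MM (p : Polynomial ℤ) : ℝ :=
  ((p.map (Int.castRingHom ℂ)).roots.map (fun a => max 1 ‖a‖)).prod

lemma MM_mul {p q : Polynomial ℤ} (hp : p.Monic) (hq : q.Monic) : MM (p * q) = MM p * MM q := by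
  unfold MM
  rw [Polynomial.map_mul, Polynomial.roots_mul, Multiset.map_add, Multiset.prod_add]
  exact ((hp.map _).mul (hq.map _)).ne_zero

lemma MM_one : MM 1 = 1 := by simp [MM]

lemma one_le_MM (p : Polynomial ℤ) : 1 ≤ MM p := by
  unfold MM
  apply Multiset.one_le_prod
  intro x hx
  obtain ⟨a, -, rfl⟩ := Multiset.mem_map.1 hx
  exact le_max_left _ _

lemma map_eq_prod {p : Polynomial ℤ} (hp : p.Monic) : p.map (Int.castRingHom ℂ) =
    ((p.map (Int.castRingHom ℂ)).roots.map
      (fun a => (Polynomial.X - Polynomial.C a : Polynomial ℂ))).prod :=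
  (IsAlgClosed.splits _).eq_prod_roots_of_monic (hp.map _)

lemma reverse_X_sub_C_aux (a : ℂ) : (Polynomial.X - Polynomial.C a : Polynomial ℂ).reverse =
    1 - Polynomial.C a * Polynomial.X := by
  rw [Polynomial.reverse, Polynomial.natDegree_X_sub_C, Polynomial.reflect_sub,
    Polynomial.reflect_one_X, Polynomial.reflect_C, pow_one]

lemma reverse_prod_aux (s : Multiset ℂ) :
    ((s.map (fun a => (Polynomial.X - Polynomial.C a : Polynomial ℂ))).prod).reverse =
    (s.map (fun a => (1 - Polynomial.C a * Polynomial.X : Polynomial ℂ))).prod := by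
  induction s using Multiset.induction_on with
  | empty => simpa using Polynomial.reverse_C (1 : ℂ)
  | cons a s ih =>
    rw [Multiset.map_cons, Multiset.prod_cons, Polynomial.reverse_mul_of_domain, ih,
      reverse_X_sub_C_aux, Multiset.map_cons, Multiset.prod_cons]

lemma map_reverse_eq_prod {p : Polynomial ℤ} (hp : p.Monic) :
    p.reverse.map (Int.castRingHom ℂ) =
    ((p.map (Int.castRingHom ℂ)).roots.map
      (fun a => (1 - Polynomial.C (conj a) * Polynomial.X : Polynomial ℂ))).prod := by
  have h1 : p.reverse.map (Int.castRingHom ℂ) = (p.map (Int.castRingHom ℂ)).reverse := by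
    rw [Polynomial.reverse, Polynomial.reverse, Polynomial.reflect_map,
      Polynomial.natDegree_map_eq_of_injective (RingHom.injective_int _)]
  have h2 : p.reverse.map (Int.castRingHom ℂ) =
      (p.reverse.map (Int.castRingHom ℂ)).map (starRingEnd ℂ) := by
    rw [Polynomial.map_map]
    congr 1
    exact RingHom.ext_int _ _
  have h3 : (p.map (Int.castRingHom ℂ)).reverse = _ :=
    (congrArg Polynomial.reverse (map_eq_prod hp)).trans (reverse_prod_aux _)
  rw [h2, h1, h3, Polynomial.map_multiset_prod, Multiset.map_map]
  simp

lemma coe_multiset_prod_aux {ι : Type*} (s : Multiset ι) (q : ι → Polynomial ℂ) :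
    (((s.map q).prod : Polynomial ℂ) : PowerSeries ℂ) =
      (s.map fun a => ((q a : Polynomial ℂ) : PowerSeries ℂ)).prod := by
  have := map_multiset_prod (Polynomial.coeToPowerSeries.ringHom (R := ℂ)) (s.map q)
  rw [Multiset.map_map] at this
  exact this

lemma norm_coeff_zero_eq {p : Polynomial ℤ} (hp : p.Monic) :
    |(p.coeff 0 : ℝ)| = ((p.map (Int.castRingHom ℂ)).roots.map (fun a => ‖a‖)).prod := by
  have h := congrArg (fun q => ‖Polynomial.coeff q 0‖) (map_eq_prod hp)
  simp only [Polynomial.coeff_map, Polynomial.coeff_zero_multiset_prod, Multiset.map_map] at h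
  have h2 := map_multiset_prod (normHom (α := ℂ)) ((p.map (Int.castRingHom ℂ)).roots.map
    ((fun q => Polynomial.coeff q 0) ∘ (fun a => (Polynomial.X - Polynomial.C a : Polynomial ℂ))))
  simp only [normHom_apply, Multiset.map_map] at h2
  rw [h2] at h
  simp at h
  exact h

lemma abs_coeff_zero_le_MM {p : Polynomial ℤ} (hp : p.Monic) : |(p.coeff 0 : ℝ)| ≤ MM p := by
  rw [norm_coeff_zero_eq hp, MM]
  apply Multiset.prod_map_le_prod_map₀
  · intros; positivity
  · intros; exact le_max_right _ _

lemma smyth_bound {p : Polynomial ℤ} (hp : p.Monic) (h0 : |p.coeff 0| = 1)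
    (h1 : p.reverse ≠ p) (h2 : p.reverse ≠ -p) : MM p + 1 ≤ MM p ^ 3 := by
  set s := (p.map (Int.castRingHom ℂ)).roots with hs
  set g := (s.map gfac).prod with hg
  set h := (s.map hfac).prod with hh
  have gC : IsContr g := IsContr.multiset_prod (by
    intro b hb
    obtain ⟨a, -, rfl⟩ := Multiset.mem_map.1 hb
    exact gfac_contr a)
  have hC : IsContr h := IsContr.multiset_prod (by
    intro b hb
    obtain ⟨a, -, rfl⟩ := Multiset.mem_map.1 hb
    exact hfac_contr a)
  -- the relation `g P* = h P`
  have rel : g * ((p.reverse.map (Int.castRingHom ℂ) : Polynomial ℂ) : PowerSeries ℂ) =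
      h * ((p.map (Int.castRingHom ℂ) : Polynomial ℂ) : PowerSeries ℂ) := by
    have e1 : ((p.map (Int.castRingHom ℂ) : Polynomial ℂ) : PowerSeries ℂ) =
        (s.map fun a => PowerSeries.X - PowerSeries.C a).prod := by
      rw [map_eq_prod hp, coe_multiset_prod_aux]
      simp [hs]
    rw [map_reverse_eq_prod hp, coe_multiset_prod_aux, e1, hg, hh, ← Multiset.prod_map_mul,
      ← Multiset.prod_map_mul]
    congr 1
    apply Multiset.map_congr rfl
    intro a _
    simpa using gh_fac a
  have hrev0 : PowerSeries.constantCoeff (p.reverse : PowerSeries ℤ) = ((1 : ℤˣ) : ℤ) := by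
    rw [← PowerSeries.coeff_zero_eq_constantCoeff_apply, Polynomial.coeff_coe,
      Polynomial.coeff_zero_reverse, hp.leadingCoeff]
    simp
  have hinv := PowerSeries.mul_invOfUnit _ _ hrev0
  set ri := PowerSeries.invOfUnit (p.reverse : PowerSeries ℤ) 1 with hri
  set ε := p.coeff 0 with hε
  have hε2 : ε * ε = 1 := by
    rw [← abs_mul_abs_self, h0]; norm_num
  obtain ⟨f, hf⟩ : ∃ f : PowerSeries ℤ, f = PowerSeries.C ε * (p : PowerSeries ℤ) * ri := ⟨_, rfl⟩
  have hfr : f * (p.reverse : PowerSeries ℤ) = PowerSeries.C ε * (p : PowerSeries ℤ) := by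
    rw [hf]; linear_combination (PowerSeries.C ε * (p : PowerSeries ℤ)) * hinv
  have hf0 : PowerSeries.coeff 0 f = 1 := by
    have := congrArg PowerSeries.constantCoeff hfr
    rw [map_mul, hrev0, map_mul] at this
    rw [PowerSeries.coeff_zero_eq_constantCoeff_apply]
    have e : PowerSeries.constantCoeff (p : PowerSeries ℤ) = ε := by
      rw [← PowerSeries.coeff_zero_eq_constantCoeff_apply, Polynomial.coeff_coe]
    rw [e] at this
    simpa [hε2] using this
  have hf1 : f ≠ 1 := by
    intro hcon
    rw [hcon, one_mul] at hfr
    have e : p.reverse = Polynomial.C ε * p := by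
      apply Polynomial.coe_injective
      rw [hfr, Polynomial.coe_mul, Polynomial.coe_C]
    rcases (abs_eq (zero_le_one)).1 h0 with h3 | h3
    · rw [h3] at e; apply h1; simpa using e
    · rw [h3] at e; apply h2; simpa using e
  -- relation over `ℂ`
  have relf : PowerSeries.C (ε : ℂ) * g = h * PowerSeries.map (Int.castRingHom ℂ) f := by
    have m1 := congrArg (PowerSeries.map (Int.castRingHom ℂ)) hfr
    rw [map_mul, map_mul, ← Polynomial.polynomial_map_coe, ← Polynomial.polynomial_map_coe,
      PowerSeries.map_C] at m1
    have hne : ((p.reverse.map (Int.castRingHom ℂ) : Polynomial ℂ) : PowerSeries ℂ) ≠ 0 := by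
      intro hz
      have := congrArg (PowerSeries.coeff 0) hz
      rw [Polynomial.coeff_coe, Polynomial.coeff_map, Polynomial.coeff_zero_reverse,
        hp.leadingCoeff] at this
      simp at this
    apply mul_right_cancel₀ hne
    have : (Int.castRingHom ℂ) ε = (ε : ℂ) := rfl
    rw [this] at m1
    linear_combination PowerSeries.C (ε : ℂ) * rel - h * m1
  -- rotate
  set z := PowerSeries.constantCoeff h with hz
  have hznorm : ‖z‖ = (MM p)⁻¹ := by
    rw [hz, hh, map_multiset_prod, Multiset.map_map]
    have h2 := map_multiset_prod (normHom (α := ℂ)) (s.map (PowerSeries.constantCoeff ∘ hfac))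
    simp only [normHom_apply, Multiset.map_map] at h2
    rw [h2, MM, ← hs, ← Multiset.prod_map_inv]
    congr 1
    apply Multiset.map_congr rfl
    intro a _
    simpa using norm_hfac_zero a
  have hMpos : 0 < MM p := lt_of_lt_of_le one_pos (one_le_MM p)
  have hzpos : 0 < ‖z‖ := by rw [hznorm]; positivity
  set u : ℂ := conj z / ‖z‖ with hu
  have hunorm : ‖u‖ = 1 := by
    rw [hu, norm_div]; simp [hzpos.ne']
  have huz : u * z = ‖z‖ := by
    rw [hu, div_mul_eq_mul_div, mul_comm, Complex.mul_conj, Complex.normSq_eq_norm_sq]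
    have : (‖z‖ : ℂ) ≠ 0 := by exact_mod_cast hzpos.ne'
    push_cast
    field_simp
  have hεn : ‖(ε : ℂ)‖ = 1 := by
    rcases (abs_eq (zero_le_one)).1 h0 with h3 | h3 <;> rw [h3] <;> simp
  have GC : IsRC (rePS (PowerSeries.C u * (PowerSeries.C (ε : ℂ) * g))) :=
    ((IsContr.const hunorm).mul ((IsContr.const hεn).mul gC)).rePS
  have HC : IsRC (rePS (PowerSeries.C u * h)) := ((IsContr.const hunorm).mul hC).rePS
  have key := core f GC HC hf0 hf1 (by
    rw [relf, ← mul_assoc, mul_comm (PowerSeries.map _ f) (rePS _), ← rePS_mul]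
    congr 2) ‖z‖ hzpos (by
    simp only [rePS, PowerSeries.coeff_mk, PowerSeries.coeff_C_mul,
      PowerSeries.coeff_zero_eq_constantCoeff_apply]
    rw [← hz, huz, Complex.ofReal_re])
  rw [hznorm] at key
  have e : ((MM p)⁻¹ ^ 3 + (MM p)⁻¹ ^ 2) * MM p ^ 3 = 1 + MM p := by field_simp
  have := mul_le_mul_of_nonneg_right key (by positivity : 0 ≤ MM p ^ 3)
  linarith

lemma smyth_le {p : Polynomial ℤ} (hp : p.Monic) (h0 : p.coeff 0 ≠ 0)
    (h1 : p.reverse ≠ p) (h2 : p.eval 1 ≠ 0) (θ₀ : ℝ) (hθ₁ : 1 < θ₀) (hθ : θ₀ ^ 3 = θ₀ + 1) :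
    θ₀ ≤ MM p := by
  have hM := one_le_MM p
  rcases (Int.one_le_abs h0).eq_or_lt with h | h
  · have h3 : p.reverse ≠ -p := by
      intro hcon
      have e : p.reverse.eval 1 = p.eval 1 := by
        have : Invertible (1 : ℤ) := invertibleOne
        have := Polynomial.eval₂_reverse_mul_pow (RingHom.id ℤ) 1 p
        rw [invOf_one, one_pow, mul_one] at this
        exact this
      rw [hcon, Polynomial.eval_neg] at e
      omega
    have hb := smyth_bound hp h.symm h1 h3
    by_contra hcon
    push Not at hcon
    nlinarith [mul_pos (sub_pos.2 hcon) (sub_pos.2 hθ₁), mul_nonneg (sub_pos.2 hcon).le (sub_nonneg.2 hM),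
      mul_pos (sub_pos.2 hcon) (by positivity : 0 < θ₀ ^ 2 + θ₀ * MM p + MM p ^ 2 )]
  · have h3 : (2 : ℝ) ≤ |(p.coeff 0 : ℝ)| := by
      exact_mod_cast (by omega : (2 : ℤ) ≤ |p.coeff 0|)
    have h4 := abs_coeff_zero_le_MM hp
    have : θ₀ ≤ 2 := by
      by_contra hcon
      push Not at hcon
      nlinarith [mul_pos (sub_pos.2 hcon) (sub_pos.2 hθ₁), mul_pos (sub_pos.2 hcon) (by positivity : 0 < θ₀ ^ 2)]
    linarith

lemma MM_lt {p : Polynomial ℤ} (hp : p.Monic) (h0 : p.coeff 0 ≠ 0) (hd : 0 < p.natDegree) :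
    MM p < Real.sqrt (∑ j ∈ Finset.range (p.natDegree + 1), ((p.coeff j : ℝ)) ^ 2) := by
  set s := (p.map (Int.castRingHom ℂ)).roots with hs
  set h := (s.map hfac).prod with hh
  have hC : IsContr h := IsContr.multiset_prod (by
    intro b hb
    obtain ⟨a, -, rfl⟩ := Multiset.mem_map.1 hb
    exact hfac_contr a)
  set Q := (s.map qfac).prod with hQ
  have rel : h * ((p.map (Int.castRingHom ℂ) : Polynomial ℂ) : PowerSeries ℂ) = (Q : PowerSeries ℂ) := by
    have e1 : ((p.map (Int.castRingHom ℂ) : Polynomial ℂ) : PowerSeries ℂ) =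
        (s.map fun a => PowerSeries.X - PowerSeries.C a).prod := by
      rw [map_eq_prod hp, coe_multiset_prod_aux]
      simp [hs]
    rw [e1, hh, ← Multiset.prod_map_mul, hQ, coe_multiset_prod_aux]
    congr 1
    apply Multiset.map_congr rfl
    intro a _
    exact hfac_mul a
  have hcard : Multiset.card s = p.natDegree := by
    have := (IsAlgClosed.splits (p.map (Int.castRingHom ℂ))).natDegree_eq_card_roots
    rw [← this, Polynomial.natDegree_map_eq_of_injective (RingHom.injective_int _)]
  have hs0 : ∀ a ∈ s, a ≠ 0 := by
    rintro a ha rfl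
    have := (Polynomial.mem_roots'.1 ha).2
    rw [Polynomial.IsRoot, ← Polynomial.coeff_zero_eq_eval_zero, Polynomial.coeff_map] at this
    apply h0
    simpa using this
  have hQ0 : Q.coeff 0 ≠ 0 := by
    rw [hQ, Polynomial.coeff_zero_multiset_prod, Multiset.map_map]
    apply Multiset.prod_ne_zero
    rw [Multiset.mem_map]
    rintro ⟨a, ha, hz⟩
    simp only [Function.comp, qfac] at hz
    split_ifs at hz
    · simp at hz; exact hs0 a ha hz
    · simp at hz
  have hQn : ‖Q.coeff p.natDegree‖ = MM p := by
    have h1 := Polynomial.coeff_multiset_prod_of_natDegree_le (s.map qfac) 1 (by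
      intro q hq
      obtain ⟨a, -, rfl⟩ := Multiset.mem_map.1 hq
      unfold qfac
      split_ifs
      · compute_degree
      · compute_degree)
    rw [Multiset.card_map, hcard, mul_one, ← hQ, Multiset.map_map] at h1
    rw [h1]
    have h2 := map_multiset_prod (normHom (α := ℂ)) (s.map ((fun q => Polynomial.coeff q 1) ∘ qfac))
    simp only [normHom_apply, Multiset.map_map] at h2
    refine h2.trans ?_
    rw [MM, ← hs]
    congr 1
    apply Multiset.map_congr rfl
    intro a _
    simp only [Function.comp, qfac]
    split_ifs with hle
    · simp [max_eq_left hle, Polynomial.coeff_X, Polynomial.coeff_C]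
    · push Not at hle
      simp [max_eq_right hle.le, Polynomial.coeff_X, Polynomial.coeff_one]
  have hsum := hC ((p.map (Int.castRingHom ℂ) : Polynomial ℂ) : PowerSeries ℂ) (p.natDegree + 1)
  rw [rel] at hsum
  simp only [Polynomial.coeff_coe, Polynomial.coeff_map] at hsum
  have hR : ∑ j ∈ Finset.range (p.natDegree + 1), ‖(Int.castRingHom ℂ) (p.coeff j)‖ ^ 2 =
      ∑ j ∈ Finset.range (p.natDegree + 1), ((p.coeff j : ℝ)) ^ 2 := by
    apply Finset.sum_congr rfl
    intro j _
    simp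
  rw [hR] at hsum
  apply Real.lt_sqrt_of_sq_lt
  refine lt_of_lt_of_le ?_ hsum
  rw [← hQn]
  have hpair : ∑ i ∈ ({0, p.natDegree} : Finset ℕ), ‖Q.coeff i‖ ^ 2 ≤
      ∑ i ∈ Finset.range (p.natDegree + 1), ‖Q.coeff i‖ ^ 2 := by
    apply Finset.sum_le_sum_of_subset_of_nonneg
    · intro m hm
      simp only [Finset.mem_insert, Finset.mem_singleton] at hm
      rw [Finset.mem_range]; omega
    · intros; positivity
  rw [Finset.sum_pair hd.ne] at hpair
  have : 0 < ‖Q.coeff 0‖ ^ 2 := by positivity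
  linarith

lemma pow_count_le_MM (θ₀ : ℝ) (hθ : 1 < θ₀) (F : Multiset (Polynomial ℤ))
    [DecidablePred fun g : Polynomial ℤ => ¬ g.reverse = g]
    (hF : ∀ g ∈ F, g.Monic ∧ (g.reverse ≠ g → θ₀ ≤ MM g)) :
    θ₀ ^ Multiset.card (Multiset.filter (fun g : Polynomial ℤ => ¬ g.reverse = g) F) ≤ MM F.prod := by
  induction F using Multiset.induction_on with
  | empty => simp [MM_one]
  | cons a s ih =>
    have hs : ∀ g ∈ s, g.Monic ∧ (g.reverse ≠ g → θ₀ ≤ MM g) := fun g hg => hF g (by simp [hg])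
    have ih := ih hs
    have ha := hF a (by simp)
    have hmon : s.prod.Monic := by
      have := Polynomial.monic_multiset_prod_of_monic s id (fun g hg => (hs g hg).1)
      simpa using this
    rw [Multiset.prod_cons, MM_mul ha.1 hmon]
    by_cases h : a.reverse = a
    · rw [Multiset.filter_cons_of_neg (p := fun g : Polynomial ℤ => ¬ g.reverse = g) _ (not_not.2 h)]
      have := one_le_MM a
      have := one_le_MM s.prod
      nlinarith
    · rw [Multiset.filter_cons_of_pos (p := fun g : Polynomial ℤ => ¬ g.reverse = g) _ h, Multiset.card_cons, pow_succ, mul_comm]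
      exact mul_le_mul (ha.2 h) ih (by positivity) (by linarith [one_le_MM a])

end Complex

lemma Titer_nonneg (β : ℝ) (j : ℕ) : 0 ≤ Titer β j := by
  cases j with
  | zero => simp [Titer]
  | succ j => exact Int.fract_nonneg _

lemma tdigit_nonneg {β : ℝ} (hβ : 1 < β) (i : ℕ) : 0 ≤ tdigit β i := by
  cases i with
  | zero => simp [tdigit]
  | succ i =>
    rw [tdigit]
    exact Int.floor_nonneg.2 (mul_nonneg (by linarith) (Titer_nonneg β i))

lemma tdigit_one_pos {β : ℝ} (hβ : 1 < β) : 1 ≤ tdigit β 1 := by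
  rw [tdigit, Titer, mul_one, Int.le_floor]
  simpa using hβ.le

lemma exists_digit_ne {β : ℝ} (hβ : 1 < β) (hn : ∀ n : ℤ, (n : ℝ) ≠ β) :
    ∃ i, 1 < i ∧ tdigit β i ≠ 0 := by
  by_contra hcon
  push Not at hcon
  have h1 : 0 < Titer β 1 := by
    rw [Titer, Titer, mul_one, Int.fract_pos]
    exact fun h => hn _ h.symm
  have hstep : ∀ j, Titer β (j + 1) = β ^ j * Titer β 1 := by
    intro j
    induction j with
    | zero => simp
    | succ j ih =>
      have := hcon (j + 2) (by omega)
      rw [tdigit] at this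
      rw [Titer, Int.fract, this, ih]
      push_cast; ring
  obtain ⟨n, hn⟩ := pow_unbounded_of_one_lt (1 / Titer β 1) hβ
  rw [div_lt_iff₀ h1, ← hstep n] at hn
  have : Titer β (n + 1) < 1 := Int.fract_lt_one _
  linarith

lemma sumPoly_degree_lt (t : ℕ → ℤ) (m : ℕ) (hm : 0 < m) :
    (∑ i ∈ Finset.Icc 1 m, C (t i) * X ^ (m - i) : Polynomial ℤ).degree < (m : ℕ) := by
  refine lt_of_le_of_lt (degree_sum_le _ _) ?_
  rw [Finset.sup_lt_iff (by exact_mod_cast WithBot.bot_lt_coe m)]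
  intro i hi
  rw [Finset.mem_Icc] at hi
  refine lt_of_le_of_lt (degree_C_mul_X_pow_le _ _) ?_
  exact_mod_cast (by omega : m - i < m)

lemma sumPoly_coeff_zero (t : ℕ → ℤ) (m : ℕ) (hm : 0 < m) :
    (∑ i ∈ Finset.Icc 1 m, C (t i) * X ^ (m - i) : Polynomial ℤ).coeff 0 = t m := by
  rw [finset_sum_coeff, Finset.sum_eq_single m]
  · simp
  · intro i hi hne
    rw [Finset.mem_Icc] at hi
    rw [coeff_C_mul, coeff_X_pow, if_neg (by omega), mul_zero]
  · intro h
    rw [Finset.mem_Icc] at h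
    omega

lemma sumPoly_eval_one (t : ℕ → ℤ) (m : ℕ) :
    (∑ i ∈ Finset.Icc 1 m, C (t i) * X ^ (m - i) : Polynomial ℤ).eval 1 =
      ∑ i ∈ Finset.Icc 1 m, t i := by
  simp [eval_finset_sum]

lemma parry_facts {β : ℝ} {P : Polynomial ℤ} (hP : IsParryPolyOf β P) :
    P.coeff 0 ≠ 0 ∧ P.eval 1 ≠ 0 ∧ 0 < P.natDegree := by
  obtain ⟨hβ, hn, ⟨m, hm, htm, hz, rfl⟩ | ⟨hinf, m, p, hper, -, hmin, rfl⟩⟩ := hP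
  · refine ⟨?_, ?_, ?_⟩
    · rw [simpleParryPoly, coeff_sub, sumPoly_coeff_zero _ _ hm, coeff_X_pow, if_neg (by omega)]
      simpa using htm
    · rw [simpleParryPoly, eval_sub, sumPoly_eval_one, eval_pow, eval_X, one_pow]
      have hm2 : 2 ≤ m := by
        obtain ⟨i, hi, hne⟩ := exists_digit_ne hβ hn
        by_contra hcon
        exact hne (hz i (by omega))
      have hsub : ∑ i ∈ ({1, m} : Finset ℕ), tdigit β i ≤ ∑ i ∈ Finset.Icc 1 m, tdigit β i := by
        apply Finset.sum_le_sum_of_subset_of_nonneg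
        · intro i hi
          simp only [Finset.mem_insert, Finset.mem_singleton] at hi
          rw [Finset.mem_Icc]; omega
        · intro i _ _
          exact tdigit_nonneg hβ i
      rw [Finset.sum_pair (by omega)] at hsub
      have h1 := tdigit_one_pos hβ
      have h2 := tdigit_nonneg hβ m
      omega
    · have : (simpleParryPoly β m).natDegree = m := by
        apply natDegree_eq_of_degree_eq_some
        rw [simpleParryPoly, degree_sub_eq_left_of_degree_lt] <;> rw [degree_X_pow]
        exact sumPoly_degree_lt _ _ hm
      omega
  · refine ⟨?_, ?_, ?_⟩
    · rw [nonsimpleParryPoly, coeff_add, coeff_sub, coeff_sub,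
        sumPoly_coeff_zero _ (m + p + 1) (by omega), coeff_X_pow, if_neg (by omega)]
      rcases Nat.eq_zero_or_pos m with rfl | hm
      · have := tdigit_nonneg hβ (0 + p + 1)
        intro hcon
        simp only [pow_zero, coeff_one_zero, Finset.Icc_eq_empty (by norm_num : ¬ (1:ℕ) ≤ 0),
          Finset.sum_empty, coeff_zero] at hcon
        omega
      · rw [sumPoly_coeff_zero _ _ hm, coeff_X_pow, if_neg (by omega)]
        intro hcon
        apply hmin (m - 1) (by omega)
        intro i hi
        rcases eq_or_ne i m with rfl | hne
        · rw [← add_assoc]; linarith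
        · exact hper i (by omega)
    · rw [nonsimpleParryPoly, eval_add, eval_sub, eval_sub, sumPoly_eval_one, sumPoly_eval_one]
      simp only [eval_pow, eval_X, one_pow]
      intro hcon
      have hsplit : ∑ i ∈ Finset.Icc 1 (m + p + 1), tdigit β i =
          ∑ i ∈ Finset.Icc 1 m, tdigit β i + ∑ i ∈ Finset.Icc (m + 1) (m + p + 1), tdigit β i := by
        have := Finset.sum_Ioc_consecutive (tdigit β) (Nat.zero_le m) (by omega : m ≤ m + p + 1)
        simp only [← Finset.Icc_add_one_left_eq_Ioc] at this
        simpa using this.symm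
      have hsum0 : ∑ i ∈ Finset.Icc (m + 1) (m + p + 1), tdigit β i = 0 := by linarith
      rw [Finset.sum_eq_zero_iff_of_nonneg (fun i _ => tdigit_nonneg hβ i)] at hsum0
      have hall : ∀ i, m + 1 ≤ i → tdigit β i = 0 := by
        intro i
        induction i using Nat.strong_induction_on with
        | _ i ih =>
          intro hi
          by_cases hle : i ≤ m + p + 1
          · exact hsum0 i (Finset.mem_Icc.2 ⟨hi, hle⟩)
          · have := hper (i - (p + 1)) (by omega)
            rw [Nat.sub_add_cancel (by omega)] at this
            rw [this]
            exact ih _ (by omega) (by omega)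
      obtain ⟨i, hi, hne⟩ := hinf m
      exact hne (hall i hi)
    · have : (nonsimpleParryPoly β m p).natDegree = m + p + 1 := by
        apply natDegree_eq_of_degree_eq_some
        have h1 := sumPoly_degree_lt (tdigit β) (m + p + 1) (by omega)
        have h2 : (X ^ m : Polynomial ℤ).degree < ((m + p + 1 : ℕ) : WithBot ℕ) := by
          rw [degree_X_pow]; exact_mod_cast (by omega : m < m + p + 1)
        have h3 : (∑ i ∈ Finset.Icc 1 m, C (tdigit β i) * X ^ (m - i) : Polynomial ℤ).degree
            < ((m + p + 1 : ℕ) : WithBot ℕ) := by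
          rcases Nat.eq_zero_or_pos m with rfl | hm
          · simp
          · exact (sumPoly_degree_lt (tdigit β) m hm).trans
              (by exact_mod_cast (by omega : m < m + p + 1))
        have d1 : (X ^ (m + p + 1) - ∑ i ∈ Finset.Icc 1 (m + p + 1),
            C (tdigit β i) * X ^ (m + p + 1 - i) : Polynomial ℤ).degree = ((m + p + 1 : ℕ) : WithBot ℕ) := by
          rw [degree_sub_eq_left_of_degree_lt] <;> rw [degree_X_pow]
          exact h1
        have d2 : (X ^ (m + p + 1) - ∑ i ∈ Finset.Icc 1 (m + p + 1),
            C (tdigit β i) * X ^ (m + p + 1 - i) - X ^ m : Polynomial ℤ).degree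
              = ((m + p + 1 : ℕ) : WithBot ℕ) := by
          rw [degree_sub_eq_left_of_degree_lt] <;> rw [d1]
          exact h2
        rw [nonsimpleParryPoly, degree_add_eq_left_of_degree_lt] <;> rw [d2]
        exact h3
      omega

/-- For every Parry number `β`, the number of non-reciprocal irreducible factors (with
multiplicity) in the factorization of the Parry polynomial `n*_β` over `ℤ[X]` is
`< Log ‖n*_β‖₂ / Log θ₀`, where `θ₀` is the smallest Pisot number (the real root `> 1`
of `X³ - X - 1`). -/
theorem smyth_nonreciprocal_factors (β : ℝ) (P : Polynomial ℤ) (hP : IsParryPolyOf β P)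
    (θ₀ : ℝ) (hθ₁ : 1 < θ₀) (hθ : θ₀ ^ 3 = θ₀ + 1)
    (F : Multiset (Polynomial ℤ)) (hF : ∀ g ∈ F, g.Monic ∧ Irreducible g)
    (hprod : F.prod = P) :
    (countNonReciprocal F : ℝ) < Real.log (polyNorm2 P) / Real.log θ₀ := by
  obtain ⟨h0, h1, hd⟩ := parry_facts hP
  have hmon : P.Monic := by
    have := monic_multiset_prod_of_monic F id (fun g hg => (hF g hg).1)
    rw [← hprod]
    simpa using this
  have hlt : MM P < polyNorm2 P := MM_lt hmon h0 hd
  have hle : θ₀ ^ countNonReciprocal F ≤ MM P := by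
    rw [← hprod]
    refine @pow_count_le_MM θ₀ hθ₁ F (Classical.decPred _) ?_
    intro g hg
    have hdvd : g ∣ P := hprod ▸ Multiset.dvd_prod hg
    obtain ⟨q, hq⟩ := hdvd
    refine ⟨(hF g hg).1, fun hrec => smyth_le (hF g hg).1 ?_ hrec ?_ θ₀ hθ₁ hθ⟩
    · intro hz
      apply h0
      rw [hq, mul_coeff_zero, hz, zero_mul]
    · intro hz
      apply h1
      rw [hq, eval_mul, hz, zero_mul]
  rw [lt_div_iff₀ (Real.log_pos hθ₁), ← Real.log_pow]
  exact Real.log_lt_log (by positivity) (lt_of_le_of_lt hle hlt)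

end
end

section
/- For every ε > 0 there exists a constant C(ε) > 0 such that for every Parry number β, the number s of distinct cyclotomic irreducible factors of the Parry polynomial n*_β satisfies s ≤ C(ε) · d_P^ε · N_m(n*_β), where d_P is the degree of n*_β and N_m(n*_β) is the number of nonzero coefficients (monomials) of n*_β. -/
open Polynomial

noncomputable section

lemma pv_divisor_bound (ε : ℝ) (hε : 0 < ε) :
    ∃ K : ℝ, 1 ≤ K ∧ ∀ n : ℕ, n ≠ 0 → ((n.divisors.card : ℕ) : ℝ) ≤ K * (n : ℝ) ^ ε := by
  obtain ⟨B, hB⟩ := exists_nat_ge ((2 : ℝ) ^ (1 / ε))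
  have hl2 : 0 < Real.log 2 := Real.log_pos (by norm_num)
  set K : ℝ := max 1 (1 / (ε * Real.log 2)) with hK
  have hK1 : 1 ≤ K := le_max_left _ _
  have hK2 : 1 ≤ K * (ε * Real.log 2) := by
    have : 1 / (ε * Real.log 2) ≤ K := le_max_right _ _
    rwa [div_le_iff₀ (by positivity)] at this
  refine ⟨K ^ B, one_le_pow₀ hK1, fun n hn => ?_⟩
  have key : ∀ p ∈ n.primeFactors, ((n.factorization p + 1 : ℕ) : ℝ) ≤
      (if p < B then K else 1) * ((p : ℝ) ^ (n.factorization p)) ^ ε := by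
    intro p hp
    have hp2 : (2 : ℝ) ≤ p := by exact_mod_cast (Nat.prime_of_mem_primeFactors hp).two_le
    set a := n.factorization p
    have e1 : ((p : ℝ) ^ a) ^ ε = ((p : ℝ) ^ ε) ^ a := by
      rw [← Real.rpow_natCast, ← Real.rpow_natCast, ← Real.rpow_mul (by positivity),
        ← Real.rpow_mul (by positivity), mul_comm]
    split_ifs with h
    · have h1 : (1 + a * (ε * Real.log 2)) ≤ ((p : ℝ) ^ a) ^ ε := by
        calc (1 + a * (ε * Real.log 2)) ≤ Real.exp (a * (ε * Real.log 2)) := by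
              linarith [Real.add_one_le_exp (a * (ε * Real.log 2))]
          _ = ((2 : ℝ) ^ ε) ^ a := by
              rw [Real.exp_nat_mul, Real.rpow_def_of_pos (by norm_num), mul_comm ε]
          _ ≤ ((p : ℝ) ^ ε) ^ a := by gcongr
          _ = _ := e1.symm
      have h2 := mul_le_mul_of_nonneg_left h1 (by linarith : 0 ≤ K)
      have h3 := mul_le_mul_of_nonneg_left hK2 (Nat.cast_nonneg (α := ℝ) a)
      push_cast
      nlinarith
    · rw [one_mul, e1]
      have hpB : (2 : ℝ) ≤ (p : ℝ) ^ ε := by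
        have : (2 : ℝ) ^ (1 / ε) ≤ p := hB.trans (by exact_mod_cast not_lt.mp h)
        calc (2 : ℝ) = ((2 : ℝ) ^ (1 / ε)) ^ ε := by
              rw [← Real.rpow_mul (by norm_num)]; field_simp; simp
          _ ≤ _ := by gcongr
      calc ((a + 1 : ℕ) : ℝ) ≤ (2 : ℝ) ^ a := by exact_mod_cast Nat.lt_two_pow_self
        _ ≤ _ := by gcongr
  rw [Nat.card_divisors hn]
  push_cast
  calc _ ≤ ∏ p ∈ n.primeFactors,
        ((if p < B then K else 1) * ((p : ℝ) ^ (n.factorization p)) ^ ε) := by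
        apply Finset.prod_le_prod
        · intros; positivity
        · intro p hp; exact_mod_cast key p hp
    _ = (∏ p ∈ n.primeFactors, (if p < B then K else 1)) * (n : ℝ) ^ ε := by
        rw [Finset.prod_mul_distrib]
        congr 1
        rw [Real.finsetProd_rpow _ _ (by intros; positivity)]
        congr 1
        conv_rhs => rw [← Nat.prod_factorization_pow_eq_self hn]
        rw [Finsupp.prod]; push_cast; rfl
    _ ≤ _ := by
        gcongr
        rw [Finset.prod_ite]
        simp only [Finset.prod_const, one_pow, mul_one]
        apply pow_le_pow_right₀ hK1
        calc _ ≤ (Finset.range B).card := by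
              apply Finset.card_le_card; intro p; simp
          _ = B := by simp

lemma pv_two_pow_le (n : ℕ) (hn : n ≠ 0) : 2 ^ n.primeFactors.card ≤ n.divisors.card := by
  rw [Nat.card_divisors hn, ← Finset.prod_const]
  apply Finset.prod_le_prod' 
  intro p hp
  have : n.factorization p ≠ 0 := by
    rw [← Nat.support_factorization] at hp; exact Finsupp.mem_support_iff.mp hp
  omega

lemma pv_prod_le (s : Finset ℕ) (hs : ∀ p ∈ s, Nat.Prime p) :
    ∏ p ∈ s, p ≤ 2 ^ s.card * ∏ p ∈ s, (p - 1) := by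
  rw [← Finset.prod_const, ← Finset.prod_mul_distrib]
  apply Finset.prod_le_prod'
  intro p hp
  have := (hs p hp).two_le
  omega

lemma pv_le_totient (n : ℕ) (hn : n ≠ 0) : n ≤ n.totient * n.divisors.card := by
  have h := Nat.totient_mul_prod_primeFactors n
  have h2 := pv_prod_le n.primeFactors (fun p hp => Nat.prime_of_mem_primeFactors hp)
  have h3 := pv_two_pow_le n hn
  have hpos : 0 < ∏ p ∈ n.primeFactors, p :=
    Finset.prod_pos fun p hp => (Nat.prime_of_mem_primeFactors hp).pos
  refine le_trans ?_ (Nat.mul_le_mul_left _ h3)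
  refine Nat.le_of_mul_le_mul_right ?_ hpos
  calc n * _ ≤ n * _ := Nat.mul_le_mul_left _ h2
    _ = 2 ^ n.primeFactors.card * (n * ∏ p ∈ n.primeFactors, (p - 1)) := by ring
    _ = _ := by rw [← h]; ring

/-- counting lemma -/
lemma pv_count (Ns J : Finset ℕ) (δ : ℕ → ℕ) (A D : ℝ) (M : ℕ) (hA : 0 ≤ A)
    (hM : ∀ n ∈ Ns, 1 ≤ n ∧ n ≤ M) (hδ : ∀ j ∈ J, δ j ≠ 0)
    (hD : ∀ j ∈ J, ((δ j).divisors.card : ℝ) ≤ D)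
    (hN : ∀ n ∈ Ns, ∃ r g : ℕ, n = g * r ∧ (r : ℝ) ≤ A * ((J.filter (fun j => g ∣ δ j)).card : ℝ)) :
    (Ns.card : ℝ) ≤ A * (J.card * (D * (1 + Real.log M))) := by
  classical
  choose! r g hrg hr using hN
  have hrpos : ∀ n ∈ Ns, 1 ≤ r n := fun n hn => by
    rcases Nat.eq_zero_or_pos (r n) with h | h
    · have := hrg n hn; have := (hM n hn).1; rw [h] at *; omega
    · exact h
  have hrM : ∀ n ∈ Ns, r n ≤ M := fun n hn => by
    refine le_trans ?_ (hM n hn).2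
    exact Nat.le_of_dvd (hM n hn).1 ⟨g n, by rw [mul_comm]; exact hrg n hn⟩
  have inner : ∀ e : ℕ, ∑ n ∈ Ns.filter (fun n => g n = e), ((r n : ℝ))⁻¹ ≤ 1 + Real.log M := by
    intro e
    have hinj : Set.InjOn r (Ns.filter (fun n => g n = e) : Finset ℕ) := by
      intro a ha b hb hab
      simp only [Finset.coe_filter, Set.mem_ofPred_eq] at ha hb
      rw [hrg a ha.1, hrg b hb.1, ha.2, hb.2, hab]
    rw [← Finset.sum_image (f := fun x : ℕ => (x : ℝ)⁻¹) hinj]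
    calc _ ≤ ∑ x ∈ Finset.Icc 1 M, ((x : ℕ) : ℝ)⁻¹ := by
          apply Finset.sum_le_sum_of_subset_of_nonneg
          · intro x hx
            simp only [Finset.mem_image, Finset.mem_filter] at hx
            obtain ⟨n, ⟨hn, -⟩, rfl⟩ := hx
            exact Finset.mem_Icc.mpr ⟨hrpos n hn, hrM n hn⟩
          · intros; positivity
      _ = ((harmonic M : ℚ) : ℝ) := by rw [harmonic_eq_sum_Icc]; push_cast; rfl
      _ ≤ _ := harmonic_le_one_add_log M
  have hlog : 0 ≤ 1 + Real.log M := by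
    have := Real.log_natCast_nonneg M; linarith
  calc (Ns.card : ℝ) = ∑ n ∈ Ns, 1 := by simp
    _ ≤ ∑ n ∈ Ns, A * ∑ j ∈ J, if g n ∣ δ j then (r n : ℝ)⁻¹ else 0 := by
        apply Finset.sum_le_sum
        intro n hn
        have h0 : (0 : ℝ) < r n := by exact_mod_cast hrpos n hn
        rw [← Finset.sum_filter, Finset.sum_const, nsmul_eq_mul, ← mul_assoc,
          ← div_eq_mul_inv, le_div_iff₀ h0, one_mul]
        exact hr n hn
    _ = A * ∑ j ∈ J, ∑ n ∈ Ns, if g n ∣ δ j then (r n : ℝ)⁻¹ else 0 := by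
        rw [← Finset.mul_sum, Finset.sum_comm]
    _ ≤ A * ∑ j ∈ J, D * (1 + Real.log M) := by
        gcongr with j hj
        calc _ = ∑ n ∈ Ns.filter (fun n => g n ∈ (δ j).divisors), (r n : ℝ)⁻¹ := by
              rw [Finset.sum_filter]; simp [hδ j hj]
          _ = ∑ e ∈ (δ j).divisors, ∑ n ∈ Ns.filter (fun n => g n = e), (r n : ℝ)⁻¹ := by
              rw [← Finset.sum_fiberwise_of_maps_to (t := (δ j).divisors) (g := g)]
              · apply Finset.sum_congr rfl
                intro e he
                rw [Finset.filter_filter]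
                congr 1
                ext n
                simp only [Finset.mem_filter]
                constructor
                · rintro ⟨a, b, c⟩; exact ⟨a, c⟩
                · rintro ⟨a, c⟩; exact ⟨a, c ▸ he, c⟩
              · intro n hn; exact (Finset.mem_filter.mp hn).2
          _ ≤ ∑ e ∈ (δ j).divisors, (1 + Real.log M) := Finset.sum_le_sum fun e _ => inner e
          _ = (δ j).divisors.card * (1 + Real.log M) := by rw [Finset.sum_const, nsmul_eq_mul]
          _ ≤ _ := by gcongr; exact hD j hj
    _ = _ := by simp

lemma pv_dvd (n : ℕ) (hn : n ≠ 0) (P : ℚ[X]) (hP : cyclotomic n ℚ ∣ P) (m : n.primeFactors → ℕ)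
    (hm : ∀ p : n.primeFactors, n / (p : ℕ) ∣ m p) :
    (X ^ n - 1 : ℚ[X]) ∣ P * ∏ p : n.primeFactors, (1 - X ^ (m p)) := by
  rw [← prod_cyclotomic_eq_X_pow_sub_one (Nat.pos_of_ne_zero hn)]
  apply Finset.prod_dvd_of_coprime
  · intro a _ b _ hab
    exact cyclotomic.isCoprime_rat hab
  · intro d hd
    obtain ⟨e, he⟩ := Nat.dvd_of_mem_divisors hd
    by_cases h1 : e = 1
    · subst h1
      rw [mul_one] at he
      exact Dvd.dvd.mul_right (he ▸ hP) _
    · obtain ⟨p, hp, hpe⟩ := Nat.exists_prime_and_dvd h1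
      have hpn : p ∈ n.primeFactors := by
        rw [Nat.mem_primeFactors]
        exact ⟨hp, he ▸ Dvd.dvd.mul_left hpe d, hn⟩
      apply Dvd.dvd.mul_left
      refine Dvd.dvd.trans ?_ (Finset.dvd_prod_of_mem _ (Finset.mem_univ (⟨p, hpn⟩ : n.primeFactors)))
      have hdm : d ∣ m ⟨p, hpn⟩ := by
        refine Dvd.dvd.trans ?_ (hm ⟨p, hpn⟩)
        obtain ⟨f, rfl⟩ := hpe
        refine ⟨f, ?_⟩
        show n / p = _
        rw [he]
        apply Nat.div_eq_of_eq_mul_left hp.pos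
        ring
      refine (cyclotomic.dvd_X_pow_sub_one d ℚ).trans ?_
      obtain ⟨f, hf⟩ := hdm
      rw [hf, dvd_sub_comm, pow_mul]
      rw [dvd_sub_comm]
      have := sub_dvd_pow_sub_pow (X ^ d : ℚ[X]) 1 f
      rw [one_pow] at this
      rw [← dvd_neg, neg_sub]
      exact this

/-- coefficient at residue class `z` -/
noncomputable def pvL (n : ℕ) (z : ZMod n) (Q : ℚ[X]) : ℚ :=
  ∑ j ∈ Q.support, if (j : ZMod n) = z then Q.coeff j else 0

lemma pvL_eq_sum (n : ℕ) (z : ZMod n) (Q : ℚ[X]) :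
    pvL n z Q = Q.sum (fun j a => if (j : ZMod n) = z then a else 0) := rfl

lemma pvL_add (n : ℕ) (z : ZMod n) (Q R : ℚ[X]) : pvL n z (Q + R) = pvL n z Q + pvL n z R := by
  simp only [pvL_eq_sum]
  apply Polynomial.sum_add_index
  · simp
  · intros; split_ifs <;> simp

noncomputable def pvLh (n : ℕ) (z : ZMod n) : ℚ[X] →+ ℚ where
  toFun := pvL n z
  map_zero' := by simp [pvL]
  map_add' := pvL_add n z

lemma pvL_monomial (n : ℕ) (z : ZMod n) (k : ℕ) (a : ℚ) :
    pvLh n z (monomial k a) = if (k : ZMod n) = z then a else 0 := by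
  show pvL n z _ = _
  rw [pvL_eq_sum, Polynomial.sum_monomial_index]
  simp

lemma pvL_mul_X_pow (n : ℕ) (z : ZMod n) (k : ℕ) (Q : ℚ[X]) :
    pvLh n z (Q * X ^ k) = pvLh n (z - k) Q := by
  induction Q using Polynomial.induction_on' with
  | add p q hp hq => rw [add_mul, map_add, map_add, hp, hq]
  | monomial j a =>
    rw [monomial_mul_X_pow, pvL_monomial, pvL_monomial]
    simp [eq_sub_iff_add_eq]

lemma pvL_of_dvd (n : ℕ) (z : ZMod n) (Q : ℚ[X]) (h : (X ^ n - 1 : ℚ[X]) ∣ Q) :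
    pvLh n z Q = 0 := by
  obtain ⟨R, rfl⟩ := h
  rw [mul_comm, mul_sub, mul_one, map_sub, pvL_mul_X_pow]
  simp

lemma pv_expand {ι : Type*} [Fintype ι] [DecidableEq ι] (n : ℕ) (z : ZMod n) (Q : ℚ[X]) (m : ι → ℕ) :
    pvLh n z (Q * ∏ p : ι, (1 - X ^ (m p))) =
      ∑ I : Finset ι, (-1) ^ I.card * pvLh n (z - ((∑ p ∈ I, m p : ℕ) : ZMod n)) Q := by
  rw [Finset.prod_sub, Finset.mul_sum, map_sum]
  simp only [Finset.powerset_univ]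
  apply Finset.sum_congr rfl
  intro I _
  rw [← pvL_mul_X_pow]
  rw [Finset.prod_const_one, mul_one, Finset.prod_pow_eq_pow_sum]
  rcases neg_one_pow_eq_or ℚ[X] I.card with h | h
  · have h' : ((-1 : ℚ)) ^ I.card = 1 := by
      rcases neg_one_pow_eq_or ℚ I.card with h2 | h2
      · exact h2
      · have := congrArg (eval 0) h; simp [h2] at this; norm_num at this
    rw [h, h']; simp
  · have h' : ((-1 : ℚ)) ^ I.card = -1 := by
      have := congrArg (eval 0) h; simpa using this
    rw [h, h']; simp

/-- the CRT step -/
lemma pv_crt (n : ℕ) (hn : n ≠ 0) (I : Finset n.primeFactors) (d : n.primeFactors → ℤ)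
    (h : (n : ℤ) ∣ ∑ p ∈ I, d p * ((n / (p : ℕ) : ℕ) : ℤ)) (q : n.primeFactors) (hq : q ∈ I) :
    ((q : ℕ) : ℤ) ∣ d q := by
  classical
  have hpr : ∀ p : n.primeFactors, Nat.Prime p := fun p => Nat.prime_of_mem_primeFactors p.2
  have hdv : ∀ p : n.primeFactors, ((n / (p : ℕ) : ℕ) : ℤ) * (p : ℕ) = n := fun p => by
    exact_mod_cast Nat.div_mul_cancel (Nat.dvd_of_mem_primeFactors p.2)
  set e : ℤ := ∏ p ∈ I.erase q, ((p : ℕ) : ℤ) with he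
  have h1 : (n : ℤ) ∣ e * (d q * ((n / (q : ℕ) : ℕ) : ℤ)) := by
    have h2 := Dvd.dvd.mul_left h e
    rw [← Finset.add_sum_erase _ _ hq, mul_add] at h2
    refine (dvd_add_left ?_).mp h2
    rw [Finset.mul_sum]
    apply Finset.dvd_sum
    intro p hp
    obtain ⟨f, hf⟩ := Finset.dvd_prod_of_mem (fun p : n.primeFactors => ((p : ℕ) : ℤ)) hp
    refine ⟨f * d p, ?_⟩
    rw [he, hf]
    linear_combination f * d p * hdv p
  have hne : ((n / (q : ℕ) : ℕ) : ℤ) ≠ 0 := by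
    intro h0
    have := hdv q
    rw [h0, zero_mul] at this
    exact hn (by exact_mod_cast this.symm)
  have h3 : ((q : ℕ) : ℤ) ∣ e * d q := by
    rw [← hdv q, mul_comm, ← mul_assoc] at h1
    exact Int.dvd_of_mul_dvd_mul_right hne h1
  have hqp := Nat.prime_iff_prime_int.mp (hpr q)
  rcases hqp.dvd_or_dvd h3 with h4 | h4
  · exfalso
    obtain ⟨p, hp, hqp'⟩ := (Prime.dvd_finsetProd_iff hqp _).mp h4
    have : (q : ℕ) = p := (Nat.prime_dvd_prime_iff_eq (hpr q) (hpr p)).mp (by exact_mod_cast hqp')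
    exact (Finset.mem_erase.mp hp).1 (Subtype.ext this.symm)
  · exact h4

lemma pvL_exists (n : ℕ) (z : ZMod n) (Q : ℚ[X]) (h : pvLh n z Q ≠ 0) :
    ∃ j ∈ Q.support, (j : ZMod n) = z := by
  obtain ⟨j, hj, hne⟩ := Finset.exists_ne_zero_of_sum_ne_zero (show pvL n z Q ≠ 0 from h)
  refine ⟨j, hj, ?_⟩
  by_contra hc
  simp [hc] at hne

/-- bound on the number of good choices for a fixed `I` -/
lemma pv_fiber (n : ℕ) (hn : n ≠ 0) (Q : ℚ[X]) (i0 : ℕ)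
    (I : Finset n.primeFactors) (hI : I.Nonempty) (B : Finset (n.primeFactors → ℕ))
    (hB : ∀ c ∈ B, (∀ p : n.primeFactors, c p ∈ Finset.Icc 1 ((p : ℕ) - 1)) ∧
      pvLh n ((i0 : ZMod n) - ((∑ p ∈ I, c p * (n / (p : ℕ)) : ℕ) : ZMod n)) Q ≠ 0) :
    B.card ≤ ((Q.support.erase i0).filter
      (fun j : ℕ => n / (∏ p ∈ I, (p : ℕ)) ∣ ((j : ℤ) - i0).natAbs)).card *
        ∏ p ∈ Iᶜ, ((p : ℕ) - 1) := by
  classical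
  have hpr : ∀ p : n.primeFactors, Nat.Prime p := fun p => Nat.prime_of_mem_primeFactors p.2
  have hex : ∀ c ∈ B, ∃ j ∈ Q.support,
      (j : ZMod n) = (i0 : ZMod n) - ((∑ p ∈ I, c p * (n / (p : ℕ)) : ℕ) : ZMod n) :=
    fun c hc => pvL_exists n _ Q (hB c hc).2
  choose! j hjs hj using hex
  have hjd : ∀ c ∈ B, (n : ℤ) ∣ (∑ p ∈ I, (c p : ℤ) * ((n / (p : ℕ) : ℕ) : ℤ)) + ((j c : ℤ) - i0) := by
    intro c hc
    rw [← ZMod.intCast_zmod_eq_zero_iff_dvd _ n] <;> try exact ⟨hn⟩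
    have e : (∑ p ∈ I, (c p : ℤ) * ((n / (p : ℕ) : ℕ) : ℤ)) =
      ((∑ p ∈ I, c p * (n / (p : ℕ)) : ℕ) : ℤ) := by push_cast; rfl
    rw [e, Int.cast_add, Int.cast_sub, Int.cast_natCast, Int.cast_natCast, Int.cast_natCast, hj c hc]
    ring
  have hlt : ∀ c ∈ B, ∀ p : n.primeFactors, 1 ≤ c p ∧ c p < (p : ℕ) := fun c hc p => by
    have h1 := Finset.mem_Icc.mp ((hB c hc).1 p)
    have := (hpr p).two_le
    omega
  set r := ∏ p ∈ I, (p : ℕ) with hr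
  have hrn : r ∣ n := by
    have h1 : r ∣ ∏ p : n.primeFactors, (p : ℕ) :=
      Finset.prod_dvd_prod_of_subset _ _ _ (Finset.subset_univ I)
    refine h1.trans ?_
    rw [Finset.prod_coe_sort n.primeFactors (fun p => p)]
    exact Nat.prod_primeFactors_dvd n
  set J := (Q.support.erase i0).filter (fun j : ℕ => n / r ∣ ((j : ℤ) - i0).natAbs) with hJ
  have hjJ : ∀ c ∈ B, j c ∈ J := by
    intro c hc
    rw [hJ, Finset.mem_filter, Finset.mem_erase]
    refine ⟨⟨?_, hjs c hc⟩, ?_⟩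
    · intro h
      have h1 := hjd c hc
      rw [h, sub_self, add_zero] at h1
      obtain ⟨q, hq⟩ := hI
      have h2 := pv_crt n hn I (fun p => (c p : ℤ)) h1 q hq
      have h3 := hlt c hc q
      have h4 : (q : ℕ) ∣ c q := by exact_mod_cast h2
      exact absurd (Nat.le_of_dvd h3.1 h4) (by omega)
    · rw [← Int.natCast_dvd]
      have h1 := hjd c hc
      have h2 : ((n / r : ℕ) : ℤ) ∣ (∑ p ∈ I, (c p : ℤ) * ((n / (p : ℕ) : ℕ) : ℤ)) := by
        apply Finset.dvd_sum
        intro p hp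
        apply Dvd.dvd.mul_left
        exact_mod_cast Nat.div_dvd_div_left hrn (Finset.dvd_prod_of_mem _ hp)
      refine (dvd_add_right h2).mp (Dvd.dvd.trans ?_ h1)
      exact_mod_cast Nat.div_dvd_of_dvd hrn
  set R : Finset (n.primeFactors → ℕ) :=
    Fintype.piFinset (fun p => if p ∈ I then {1} else Finset.Icc 1 ((p : ℕ) - 1)) with hR
  have hRcard : R.card = ∏ p ∈ Iᶜ, ((p : ℕ) - 1) := by
    rw [hR, Fintype.card_piFinset, ← Finset.prod_mul_prod_compl I]
    rw [Finset.prod_eq_one, one_mul]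
    · apply Finset.prod_congr rfl
      intro p hp
      simp [Finset.mem_compl.mp hp]
    · intro p hp; simp [hp]
  rw [← hRcard, ← Finset.card_product]
  apply Finset.card_le_card_of_injOn (fun c => (j c, fun p => if p ∈ I then 1 else c p))
  · intro c hc
    have hc : c ∈ B := hc
    simp only [Finset.coe_product, Set.mem_prod, Finset.mem_coe]
    refine ⟨hjJ c hc, ?_⟩
    rw [hR, Fintype.mem_piFinset]
    intro p
    by_cases hp : p ∈ I
    · simp [hp]
    · simp only [hp, if_false]; exact (hB c hc).1 p
  · intro c hc c' hc' heq
    have hc : c ∈ B := hc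
    have hc' : c' ∈ B := hc'
    simp only [Prod.mk.injEq] at heq
    obtain ⟨h1, h2⟩ := heq
    funext p
    by_cases hp : p ∈ I
    · have h3 := dvd_sub (hjd c hc) (hjd c' hc')
      rw [h1] at h3
      have h4 : (n : ℤ) ∣ ∑ p ∈ I, ((c p : ℤ) - c' p) * ((n / (p : ℕ) : ℕ) : ℤ) := by
        have e : ∑ p ∈ I, ((c p : ℤ) - c' p) * ((n / (p : ℕ) : ℕ) : ℤ) =
            (∑ p ∈ I, (c p : ℤ) * ((n / (p : ℕ) : ℕ) : ℤ)) -
            ∑ p ∈ I, (c' p : ℤ) * ((n / (p : ℕ) : ℕ) : ℤ) := by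
          rw [← Finset.sum_sub_distrib]
          exact Finset.sum_congr rfl fun p _ => sub_mul _ _ _
        rw [e]
        rwa [add_sub_add_right_eq_sub] at h3
      have h5 := pv_crt n hn I (fun p => (c p : ℤ) - c' p) h4 p hp
      have h6 := hlt c hc p
      have h7 := hlt c' hc' p
      have h8 := Int.eq_zero_of_abs_lt_dvd h5 (by rw [abs_lt]; constructor <;> omega)
      omega
    · have := congrFun h2 p
      simpa [hp] using this

lemma pv_core (n : ℕ) (hn : n ≠ 0) (Q : ℚ[X]) (hQ : cyclotomic n ℚ ∣ Q) (i0 : ℕ)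
    (hi0 : i0 ∈ Q.support) :
    ∃ r g : ℕ, n = g * r ∧ r ≤ 4 ^ n.primeFactors.card * ((Q.support.erase i0).filter
      (fun j : ℕ => g ∣ ((j : ℤ) - i0).natAbs)).card := by
  classical
  have hpr : ∀ p : n.primeFactors, Nat.Prime p := fun p => Nat.prime_of_mem_primeFactors p.2
  by_cases hf : pvLh n (i0 : ZMod n) Q = 0
  · refine ⟨1, n, by ring, ?_⟩
    apply Nat.mul_pos (by positivity)
    rw [Finset.card_pos]
    by_contra hc
    rw [Finset.not_nonempty_iff_eq_empty, Finset.filter_eq_empty_iff] at hc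
    have : pvL n (i0 : ZMod n) Q = Q.coeff i0 := by
      unfold pvL
      rw [Finset.sum_eq_single_of_mem i0 hi0]
      · simp
      · intro j hj hne
        rw [if_neg]
        intro h
        apply hc (Finset.mem_erase.mpr ⟨hne, hj⟩)
        rw [← Int.natCast_dvd, ← ZMod.intCast_zmod_eq_zero_iff_dvd _ n] <;> try exact ⟨hn⟩
        push_cast
        rw [h, sub_self]
    exact (mem_support_iff.mp hi0) (this ▸ hf)
  set Om : Finset (n.primeFactors → ℕ) :=
    Fintype.piFinset (fun p => Finset.Icc 1 ((p : ℕ) - 1)) with hOm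
  have hOmc : Om.card = ∏ p : n.primeFactors, ((p : ℕ) - 1) := by
    rw [hOm, Fintype.card_piFinset]; simp
  set good : Finset n.primeFactors → (n.primeFactors → ℕ) → Prop := fun I c =>
    pvLh n ((i0 : ZMod n) - ((∑ p ∈ I, c p * (n / (p : ℕ)) : ℕ) : ZMod n)) Q ≠ 0 with hgood
  have hexI : ∀ c ∈ Om, ∃ I : Finset n.primeFactors, I.Nonempty ∧ good I c := by
    intro c hc
    by_contra hcon
    push Not at hcon
    have h1 := pvL_of_dvd n (i0 : ZMod n) _ (pv_dvd n hn Q hQ (fun p => c p * (n / (p : ℕ)))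
      (fun p => Dvd.intro_left _ rfl))
    rw [pv_expand, Finset.sum_eq_single_of_mem ∅ (Finset.mem_univ _)] at h1
    · simp at h1; exact hf h1
    · intro I _ hI
      have := hcon I (Finset.nonempty_iff_ne_empty.mpr hI)
      simp only [hgood, not_not] at this
      rw [this, mul_zero]
  set NI : Finset (Finset n.primeFactors) := Finset.univ.erase ∅ with hNI
  have hcover : Om.card ≤ ∑ I ∈ NI, (Om.filter (good I)).card := by
    refine le_trans (Finset.card_le_card ?_) Finset.card_biUnion_le
    intro c hc
    obtain ⟨I, hI, hg⟩ := hexI c hc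
    rw [Finset.mem_biUnion]
    exact ⟨I, Finset.mem_erase.mpr ⟨hI.ne_empty, Finset.mem_univ _⟩,
      Finset.mem_filter.mpr ⟨hc, hg⟩⟩
  have hOmpos : 0 < Om.card := by
    rw [hOmc]
    exact Finset.prod_pos fun p _ => by have := (hpr p).two_le; omega
  set k := n.primeFactors.card with hk
  have hNIcard : NI.card ≤ 2 ^ k := by
    refine (Finset.card_erase_le).trans ?_
    simp [hk]
  have hexists : ∃ I ∈ NI, Om.card ≤ 2 ^ k * (Om.filter (good I)).card := by
    by_contra hcon
    push Not at hcon
    have hne : NI.Nonempty := by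
      by_contra h
      rw [Finset.not_nonempty_iff_eq_empty] at h
      rw [h, Finset.sum_empty] at hcover
      omega
    have h1 := Finset.sum_lt_sum_of_nonempty hne hcon
    rw [← Finset.mul_sum, Finset.sum_const, smul_eq_mul] at h1
    have h2 := Nat.mul_le_mul_left (2 ^ k) hcover
    have h3 := Nat.mul_le_mul_right Om.card hNIcard
    omega
  obtain ⟨I, hI, hle⟩ := hexists
  have hIne : I.Nonempty := Finset.nonempty_iff_ne_empty.mpr (Finset.mem_erase.mp hI).1
  have hfib := pv_fiber n hn Q i0 I hIne (Om.filter (good I)) (by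
    intro c hc
    rw [Finset.mem_filter] at hc
    exact ⟨fun p => (Fintype.mem_piFinset.mp hc.1) p, hc.2⟩)
  have hrn : (∏ p ∈ I, (p : ℕ)) ∣ n := by
    have h1 : (∏ p ∈ I, (p : ℕ)) ∣ ∏ p : n.primeFactors, (p : ℕ) :=
      Finset.prod_dvd_prod_of_subset _ _ _ (Finset.subset_univ I)
    refine h1.trans ?_
    rw [Finset.prod_coe_sort n.primeFactors (fun p => p)]
    exact Nat.prod_primeFactors_dvd n
  refine ⟨∏ p ∈ I, (p : ℕ), n / ∏ p ∈ I, (p : ℕ), (Nat.div_mul_cancel hrn).symm, ?_⟩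
  set Jc := ((Q.support.erase i0).filter
      (fun j : ℕ => n / (∏ p ∈ I, (p : ℕ)) ∣ ((j : ℤ) - i0).natAbs)).card
  have hcpos : 0 < ∏ p ∈ Iᶜ, ((p : ℕ) - 1) :=
    Finset.prod_pos fun p _ => by have := (hpr p).two_le; omega
  rw [hOmc, ← Finset.prod_mul_prod_compl I] at hle
  have h5 : ∏ p ∈ I, ((p : ℕ) - 1) ≤ 2 ^ k * Jc := by
    refine Nat.le_of_mul_le_mul_right ?_ hcpos
    calc _ ≤ _ := hle
      _ ≤ 2 ^ k * _ := Nat.mul_le_mul_left _ hfib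
      _ = _ := by ring
  have h6 : ∏ p ∈ I, (p : ℕ) ≤ 2 ^ k * ∏ p ∈ I, ((p : ℕ) - 1) := by
    have hIk : I.card ≤ k := by
      refine (Finset.card_le_univ I).trans ?_
      simp [hk]
    refine le_trans ?_ (Nat.mul_le_mul_right _ (Nat.pow_le_pow_right (by norm_num) hIk))
    rw [← Finset.prod_const, ← Finset.prod_mul_distrib]
    apply Finset.prod_le_prod'
    intro p hp
    have := (hpr p).two_le
    omega
  calc _ ≤ _ := h6
    _ ≤ 2 ^ k * (2 ^ k * Jc) := Nat.mul_le_mul_left _ h5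
    _ = _ := by rw [← mul_assoc, ← mul_pow]; norm_num

lemma pv_parry_ne_zero (β : ℝ) (P : ℤ[X]) (h : IsParryPolyOf β P) : P ≠ 0 := by
  obtain ⟨-, -, h | h⟩ := h
  · obtain ⟨m, hm, -, -, rfl⟩ := h
    intro h0
    have h1 := congrArg (fun Q => coeff Q m) h0
    simp only [simpleParryPoly, coeff_sub, finsetSum_coeff, coeff_C_mul, coeff_X_pow,
      coeff_zero] at h1
    rw [Finset.sum_eq_zero] at h1
    · simp at h1
    · intro i hi
      have := Finset.mem_Icc.mp hi
      rw [if_neg (by omega), mul_zero]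
  · obtain ⟨-, m, p, -, -, -, rfl⟩ := h
    intro h0
    have h1 := congrArg (fun Q => coeff Q (m + p + 1)) h0
    simp only [nonsimpleParryPoly, coeff_sub, coeff_add, finsetSum_coeff, coeff_C_mul, coeff_X_pow,
      coeff_zero] at h1
    rw [Finset.sum_eq_zero, Finset.sum_eq_zero, if_neg (show ¬ m + p + 1 = m by omega)] at h1
    · simp at h1
    · intro i hi
      have := Finset.mem_Icc.mp hi
      rw [if_neg (by omega), mul_zero]
    · intro i hi
      have := Finset.mem_Icc.mp hi
      rw [if_neg (by omega), mul_zero]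

lemma pv_general (ε : ℝ) (hε : 0 < ε) :
    ∃ Cε : ℝ, 0 < Cε ∧ ∀ P : ℤ[X], P ≠ 0 →
      ((Set.ncard {n : ℕ | 1 ≤ n ∧ Polynomial.cyclotomic n ℤ ∣ P}) : ℝ) ≤
        Cε * ((P.natDegree : ℝ) ^ ε) * (P.support.card : ℝ) := by
  classical
  set e : ℝ := ε / 7 with he
  have he0 : 0 < e := by positivity
  obtain ⟨K, hK1, hK⟩ := pv_divisor_bound e he0
  obtain ⟨K', hK1', hK'⟩ := pv_divisor_bound (1 / 2) (by norm_num)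
  set L : ℝ := (K' ^ 2) ^ e with hL
  have hK0 : 0 < K := by linarith
  have hK0' : 0 < K' := by linarith
  have hL0 : 0 < L := by positivity
  refine ⟨K ^ 3 * L ^ 3 * (1 + 1 / e), by positivity, fun P hP => ?_⟩
  set d := P.natDegree with hd
  set M : ℕ := ⌊K' ^ 2 * (d : ℝ) ^ 2⌋₊ with hM
  have hmem : ∀ n : ℕ, 1 ≤ n → cyclotomic n ℤ ∣ P → 1 ≤ d ∧ n ≤ M := by
    intro n hn hdiv
    have h1 : n.totient ≤ d := by
      rw [← natDegree_cyclotomic n ℤ]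
      exact natDegree_le_of_dvd hdiv hP
    have h2 : 0 < n.totient := Nat.totient_pos.mpr hn
    refine ⟨by omega, ?_⟩
    have hn0 : (0 : ℝ) < n := by exact_mod_cast hn
    have h3 : (n : ℝ) ≤ d * (K' * Real.sqrt n) := by
      calc (n : ℝ) ≤ (n.totient : ℝ) * n.divisors.card := by
            exact_mod_cast pv_le_totient n (by omega)
        _ ≤ d * (K' * Real.sqrt n) := by
            rw [Real.sqrt_eq_rpow]
            gcongr
            exact hK' n (by omega)
    have hs : 0 < Real.sqrt n := Real.sqrt_pos.mpr hn0
    have hss : Real.sqrt n * Real.sqrt n = n := Real.mul_self_sqrt hn0.le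
    have h4 : Real.sqrt n ≤ d * K' := by
      by_contra hc
      push Not at hc
      nlinarith
    rw [hM]
    apply Nat.le_floor
    nlinarith
  set Ns : Finset ℕ := (Finset.Icc 1 M).filter (fun n => cyclotomic n ℤ ∣ P) with hNs
  have hset : {n : ℕ | 1 ≤ n ∧ Polynomial.cyclotomic n ℤ ∣ P} = (Ns : Set ℕ) := by
    ext n
    simp only [hNs, Finset.coe_filter, Finset.mem_Icc, Set.mem_ofPred_eq]
    constructor
    · rintro ⟨h1, h2⟩; exact ⟨⟨h1, (hmem n h1 h2).2⟩, h2⟩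
    · rintro ⟨⟨h1, -⟩, h2⟩; exact ⟨h1, h2⟩
  rw [hset, Set.ncard_coe_finset]
  rcases Ns.eq_empty_or_nonempty with hemp | ⟨n0, hn0⟩
  · rw [hemp]; simp only [Finset.card_empty, Nat.cast_zero]; positivity
  have hNsm : ∀ n ∈ Ns, (1 ≤ n ∧ n ≤ M) ∧ cyclotomic n ℤ ∣ P := fun n hn => by
    simpa [hNs] using hn
  have hd1 : 1 ≤ d := (hmem n0 (hNsm n0 hn0).1.1 (hNsm n0 hn0).2).1
  have hM1 : 1 ≤ M := (hNsm n0 hn0).1.1.trans (hNsm n0 hn0).1.2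
  set Q : ℚ[X] := P.map (Int.castRingHom ℚ) with hQ
  have hsupp : Q.support = P.support :=
    support_map_of_injective P (RingHom.injective_int (Int.castRingHom ℚ))
  have hi0 : d ∈ P.support := natDegree_mem_support_of_nonzero hP
  set u : ℝ := (d : ℝ) ^ e with hu
  have hu0 : 0 ≤ u := by positivity
  set w : ℝ := (M : ℝ) ^ e with hw
  have hM1r : (1 : ℝ) ≤ M := by exact_mod_cast hM1
  have hw1 : 1 ≤ w := Real.one_le_rpow hM1r he0.le
  have hwle : w ≤ L * u ^ 2 := by
    calc w ≤ (K' ^ 2 * (d : ℝ) ^ 2) ^ e := by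
          apply Real.rpow_le_rpow (by positivity) _ he0.le
          exact Nat.floor_le (by positivity)
      _ = L * u ^ 2 := by
          rw [Real.mul_rpow (by positivity) (by positivity), hu, ← Real.rpow_natCast (d : ℝ) 2,
            ← Real.rpow_mul (by positivity), mul_comm ((2 : ℕ) : ℝ) e,
            Real.rpow_mul (by positivity), Real.rpow_natCast]
  have hcount := pv_count Ns (P.support.erase d) (fun j => ((j : ℤ) - d).natAbs)
    ((K * w) ^ 2) (K * u) M (by positivity) (fun n hn => (hNsm n hn).1)
    (by
      intro j hj
      have := (Finset.mem_erase.mp hj).1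
      omega)
    (by
      intro j hj
      have h1 := (Finset.mem_erase.mp hj).1
      have h2 := le_natDegree_of_mem_supp j (Finset.mem_erase.mp hj).2
      have h3 : ((j : ℤ) - d).natAbs ≤ d := by omega
      refine (hK _ (by omega)).trans ?_
      rw [hu]
      gcongr)
    (by
      intro n hn
      obtain ⟨⟨hn1, hnM⟩, hdv⟩ := hNsm n hn
      have hdvQ : cyclotomic n ℚ ∣ Q := by
        rw [← map_cyclotomic_int n ℚ]
        exact Polynomial.map_dvd _ hdv
      obtain ⟨r, g, h1, h2⟩ := pv_core n (by omega) Q hdvQ d (hsupp ▸ hi0)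
      refine ⟨r, g, h1, ?_⟩
      rw [hsupp] at h2
      have h3 : (r : ℝ) ≤ (4 : ℝ) ^ n.primeFactors.card *
        (((P.support.erase d).filter (fun j : ℕ => g ∣ ((j : ℤ) - d).natAbs)).card : ℝ) := by
        exact_mod_cast h2
      refine h3.trans ?_
      gcongr
      have h4 : (2 : ℝ) ^ n.primeFactors.card ≤ K * w := by
        calc (2 : ℝ) ^ n.primeFactors.card ≤ (n.divisors.card : ℝ) := by
              exact_mod_cast pv_two_pow_le n (by omega)
          _ ≤ K * (n : ℝ) ^ e := hK n (by omega)
          _ ≤ K * w := by rw [hw]; gcongr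
      calc (4 : ℝ) ^ n.primeFactors.card = ((2 : ℝ) ^ n.primeFactors.card) ^ 2 := by
            rw [← pow_mul, mul_comm, pow_mul]; norm_num
        _ ≤ _ := by gcongr)
  have hlog : 1 + Real.log M ≤ (1 + 1 / e) * (L * u ^ 2) := by
    have h1 := Real.log_le_rpow_div (x := (M : ℝ)) (by positivity) he0
    calc 1 + Real.log M ≤ w + w / e := by linarith
      _ = (1 + 1 / e) * w := by ring
      _ ≤ _ := by gcongr
  have hlog0 : 0 ≤ 1 + Real.log M := by
    have := Real.log_natCast_nonneg M; linarith
  have hcard : (((P.support.erase d).card : ℕ) : ℝ) ≤ P.support.card := by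
    exact_mod_cast Finset.card_erase_le
  have hu7 : (d : ℝ) ^ ε = u ^ 7 := by
    rw [hu, ← Real.rpow_natCast, ← Real.rpow_mul (by positivity)]
    congr 1
    rw [he]; push_cast; ring
  calc (Ns.card : ℝ) ≤ _ := hcount
    _ ≤ (K * (L * u ^ 2)) ^ 2 *
        (P.support.card * ((K * u) * ((1 + 1 / e) * (L * u ^ 2)))) := by gcongr
    _ = _ := by rw [hu7]; ring

/-- For every `ε > 0` there is a constant `C(ε) > 0` such that for every Parry number
`β`, the number `s` of distinct cyclotomic irreducible factors of the Parry polynomial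
`n*_β` satisfies `s ≤ C(ε)·d_P^ε·N_m(n*_β)`, where `N_m(n*_β)` is the number of nonzero
monomials of `n*_β`. -/
theorem pinner_vaaler_cyclotomic_factors (ε : ℝ) (hε : 0 < ε) :
    ∃ Cε : ℝ, 0 < Cε ∧ ∀ (β : ℝ) (P : Polynomial ℤ), IsParryPolyOf β P →
      ((Set.ncard {n : ℕ | 1 ≤ n ∧ Polynomial.cyclotomic n ℤ ∣ P}) : ℝ) ≤
        Cε * ((P.natDegree : ℝ) ^ ε) * (P.support.card : ℝ) := by
  obtain ⟨c, hc, h⟩ := pv_general ε hε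
  exact ⟨c, hc, fun β P hP => h P (pv_parry_ne_zero β P hP)⟩

end
end
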